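/- arXiv:1307.6440 — 3 statements merged into one kernel-verified Lean document; each statement's English description precedes it below -/
import Mathlib

section
/- The generating function P0(x,y) of crossing-free partitions of points on a circle, where x marks the number of points and y marks the number of blocks, satisfies x·P0(x,y)² + (xy − x − 1)·P0(x,y) + 1 = 0. -/
/-- Two chords `(p.1, p.2)` and `(q.1, q.2)` of a circle with vertices labeled
`0, 1, …, n-1` in circular order interleave, i.e. cross, when
`p.1 < q.1 < p.2 < q.2`. -/
def Interleaves {n : ℕ} (p q : Fin n × Fin n) : Prop :=
  p.1 < q.1 ∧ q.1 < p.2 ∧ p.2 < q.2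

instance {n : ℕ} (p q : Fin n × Fin n) : Decidable (Interleaves p q) :=
  inferInstanceAs (Decidable (_ ∧ _ ∧ _))

/-- The number of crossings of a set of chords (each chord recorded with its
endpoints in increasing order): the number of unordered pairs of chords whose
endpoints interleave around the circle. -/
def crossNum {n : ℕ} (D : Finset (Fin n × Fin n)) : ℕ :=
  ((D ×ˢ D).filter fun pq => Interleaves pq.1 pq.2).card

/-- `a` and `b` lie in the same block of the partition `P`. -/
def SameBlock {n : ℕ} (P : Finpartition (Finset.univ : Finset (Fin n))) (a b : Fin n) : Prop :=
  ∃ B ∈ P.parts, a ∈ B ∧ b ∈ B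

/-- The number of crossings (counted with multiplicity) of a partition of `n`
points on a circle: the number of unordered pairs of interleaving chords whose
endpoints lie two in one block and two in a different block. -/
noncomputable def crossNumPart {n : ℕ}
    (P : Finpartition (Finset.univ : Finset (Fin n))) : ℕ :=
  Nat.card {q : (Fin n × Fin n) × (Fin n × Fin n) //
    Interleaves q.1 q.2 ∧ SameBlock P q.1.1 q.1.2 ∧ SameBlock P q.2.1 q.2.2 ∧
    ¬ SameBlock P q.1.1 q.2.1}

open MvPowerSeries

/-- The generating function `P₀(x,y)` of crossing-free partitions of points on
a circle, where `x` (the variable indexed by `0`) marks the number of points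
and `y` (the variable indexed by `1`) marks the number of blocks. -/
noncomputable def partGF0 : MvPowerSeries (Fin 2) ℚ :=
  fun e => (Nat.card {P : Finpartition (Finset.univ : Finset (Fin (e 0))) //
    crossNumPart P = 0 ∧ P.parts.card = e 1} : ℚ)

/-!
The last point of a nonempty noncrossing partition is either a singleton block, whose removal leaves
an arbitrary noncrossing partition, or it has a predecessor `k` in its block. In the second case no
block meets both `{0, …, k}` and the points strictly between `k` and the last one, so removing the
last point leaves an arbitrary nonempty noncrossing partition followed by an arbitrary one. Hence
`P₀ = 1 + N` and `N = x * y * P₀ + x * N * P₀`, where `N` counts the nonempty partitions.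
-/

section GeneratingSeries

variable {σ α β R : Type*} [Semiring R]

variable (R) in
/-- The generating series of a set `S` whose elements `a` carry a multivariate size `w a`: the
coefficient at `e` counts the elements of size `e`, and is junk if there are infinitely many. -/
noncomputable def generatingSeries (S : Set α) (w : α → σ →₀ ℕ) : MvPowerSeries σ R :=
  fun e => ({a ∈ S | w a = e}.ncard : R)

theorem coeff_generatingSeries (S : Set α) (w : α → σ →₀ ℕ) (e : σ →₀ ℕ) :
    coeff e (generatingSeries R S w) = ({a ∈ S | w a = e}.ncard : R) :=
  rfl

theorem generatingSeries_singleton (a : α) (w : α → σ →₀ ℕ) :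
    generatingSeries R {a} w = monomial (w a) 1 := by
  classical
  ext e
  rw [coeff_generatingSeries, coeff_monomial]
  split_ifs with h
  · rw [show {b ∈ ({a} : Set α) | w b = e} = {a} by ext; grind]
    simp
  · rw [show {b ∈ ({a} : Set α) | w b = e} = ∅ by ext; grind]
    simp

theorem generatingSeries_union {S T : Set α} {w : α → σ →₀ ℕ} (hST : Disjoint S T)
    (hS : ∀ e, {a ∈ S | w a = e}.Finite) (hT : ∀ e, {a ∈ T | w a = e}.Finite) :
    generatingSeries R (S ∪ T) w = generatingSeries R S w + generatingSeries R T w := by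
  ext e
  have hsplit : {a ∈ S ∪ T | w a = e} = {a ∈ S | w a = e} ∪ {a ∈ T | w a = e} := by
    ext; grind
  rw [map_add, coeff_generatingSeries, hsplit, Set.ncard_union_eq
    (hST.mono (Set.sep_subset ..) (Set.sep_subset ..)) (hS e) (hT e), Nat.cast_add]
  rfl

theorem generatingSeries_image {S : Set α} {φ : α → β} {v : α → σ →₀ ℕ} {w : β → σ →₀ ℕ}
    (hφ : Set.InjOn φ S) (hw : ∀ a ∈ S, w (φ a) = v a) :
    generatingSeries R (φ '' S) w = generatingSeries R S v := by
  ext e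
  have himage : {b ∈ φ '' S | w b = e} = φ '' {a ∈ S | v a = e} := by
    ext; grind
  rw [coeff_generatingSeries, himage, (hφ.mono (Set.sep_subset ..)).ncard_image]
  rfl

theorem generatingSeries_prod {S : Set α} {T : Set β} {v : α → σ →₀ ℕ} {w : β → σ →₀ ℕ}
    (hS : ∀ e, {a ∈ S | v a = e}.Finite) (hT : ∀ e, {b ∈ T | w b = e}.Finite) :
    generatingSeries R (S ×ˢ T) (fun p => v p.1 + w p.2) =
      generatingSeries R S v * generatingSeries R T w := by
  classical
  ext e
  let sizes : Set ((σ →₀ ℕ) × (σ →₀ ℕ)) := Finset.HasAntidiagonal.antidiagonal e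
  have hsplit : {p ∈ S ×ˢ T | v p.1 + w p.2 = e} =
      ⋃ d ∈ sizes, {a ∈ S | v a = d.1} ×ˢ {b ∈ T | w b = d.2} := by
    ext p
    simp only [sizes, Set.mem_iUnion, Set.mem_prod, Set.mem_ofPred, Finset.mem_coe,
      Finset.HasAntidiagonal.mem_antidiagonal]
    constructor
    · rintro ⟨⟨ha, hb⟩, hab⟩
      exact ⟨(v p.1, w p.2), hab, ⟨ha, rfl⟩, hb, rfl⟩
    · rintro ⟨d, hd, ⟨ha, hv⟩, hb, hw⟩
      exact ⟨⟨ha, hb⟩, by rw [hv, hw, hd]⟩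
  rw [coeff_generatingSeries, hsplit, (Finset.finite_toSet _).ncard_biUnion
      (fun d _ => (hS d.1).prod (hT d.2)) ?_, coeff_mul, finsum_mem_coe_finset, Nat.cast_sum]
  · simp only [Set.ncard_prod, Nat.cast_mul, coeff_generatingSeries]
  · rintro c - d - hcd
    refine Set.disjoint_left.2 fun p hc hd => hcd (Prod.ext ?_ ?_)
    · exact hc.1.2.symm.trans hd.1.2
    · exact hc.2.2.symm.trans hd.2.2

theorem generatingSeries_const_add (S : Set α) (d : σ →₀ ℕ) (w : α → σ →₀ ℕ) :
    generatingSeries R S (fun a => d + w a) = monomial d 1 * generatingSeries R S w := by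
  classical
  ext e
  rw [coeff_monomial_mul]
  split_ifs with hde
  · obtain ⟨e, rfl⟩ := exists_add_of_le hde
    simp only [coeff_generatingSeries, add_right_inj, add_tsub_cancel_left, one_mul]
  · have hempty : {a ∈ S | d + w a = e} = ∅ :=
      Set.eq_empty_of_forall_notMem fun a ha => hde (ha.2 ▸ le_self_add)
    rw [coeff_generatingSeries, hempty, Set.ncard_empty, Nat.cast_zero]

end GeneratingSeries

section BlockMin

variable {α : Type*} [LinearOrder α] [Fintype α] (P : Finpartition (Finset.univ : Finset α))

/-- No two distinct blocks of `P` have points `a < c` and `b < d` in the order `a < b < c < d`. -/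
def IsNoncrossing : Prop :=
  ∀ ⦃a b c d : α⦄, a < b → b < c → c < d → P.part a = P.part c → P.part b = P.part d →
    P.part a = P.part b

/-- The minimum of the block containing `a`. The map `blockMin P` determines `P`. -/
def blockMin (a : α) : α :=
  (P.part a).min' ⟨a, P.mem_part (Finset.mem_univ a)⟩

theorem blockMin_le_of_part_eq {a b : α} (h : P.part a = P.part b) : blockMin P a ≤ b :=
  Finset.min'_le _ _ (h ▸ P.mem_part (Finset.mem_univ b))

theorem part_blockMin (a : α) : P.part (blockMin P a) = P.part a :=
  P.part_eq_of_mem (P.part_mem.2 (Finset.mem_univ a)) (Finset.min'_mem _ _)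

theorem blockMin_eq_blockMin_iff {a b : α} :
    blockMin P a = blockMin P b ↔ P.part a = P.part b := by
  refine ⟨fun h => ?_, fun h => ?_⟩
  · rw [← part_blockMin P a, h, part_blockMin]
  · simp only [blockMin, h]

theorem blockMin_blockMin (a : α) : blockMin P (blockMin P a) = blockMin P a :=
  (blockMin_eq_blockMin_iff P).2 (part_blockMin P a)

variable {P} in
theorem IsNoncrossing.blockMin_le_blockMin (hP : IsNoncrossing P) {a b : α}
    (hba : blockMin P b ≤ a) (hab : a ≤ b) : blockMin P b ≤ blockMin P a := by
  by_contra! hlt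
  have hba' : blockMin P b ≠ a := by
    rintro rfl
    exact hlt.ne (blockMin_blockMin P b)
  have hab' : a ≠ b := by
    rintro rfl
    exact hlt.ne rfl
  have hpart := hP hlt (hba.lt_of_ne hba') (hab.lt_of_ne hab') (part_blockMin P a)
    (part_blockMin P b)
  rw [part_blockMin, part_blockMin, ← blockMin_eq_blockMin_iff] at hpart
  exact hlt.ne hpart

theorem bijOn_part_blockMin_eq_self : Set.BijOn P.part {a | blockMin P a = a} P.parts := by
  refine ⟨fun a _ => P.part_mem.2 (Finset.mem_univ a), fun a ha b hb hab => ?_, fun B hB => ?_⟩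
  · rw [← Set.mem_ofPred.1 ha, ← Set.mem_ofPred.1 hb, blockMin_eq_blockMin_iff, hab]
  · obtain ⟨a, -, rfl⟩ := P.part_surjOn hB
    exact ⟨blockMin P a, blockMin_blockMin P a, part_blockMin P a⟩

theorem blockMin_injective :
    Function.Injective (blockMin : Finpartition (Finset.univ : Finset α) → α → α) := by
  intro P Q h
  have hpart : P.part = Q.part := by
    ext a b
    simp only [P.mem_part_iff_part_eq_part (Finset.mem_univ b) (Finset.mem_univ a),
      Q.mem_part_iff_part_eq_part (Finset.mem_univ b) (Finset.mem_univ a),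
      ← blockMin_eq_blockMin_iff, h]
  have himage (P : Finpartition (Finset.univ : Finset α)) : (P.parts : Set _) = Set.range P.part :=
    (P.part_surjOn.image_eq_of_mapsTo fun a => P.part_mem.2).symm.trans (by simp)
  refine Finpartition.ext (Finset.coe_injective ?_)
  rw [himage, himage, hpart]

end BlockMin

/-- The maps `ℕ → ℕ` that send each point of a noncrossing partition of `{0, …, n - 1}` to the
minimum of its block. `nested` is the noncrossing condition, and `fixed` makes equality of
partitions equality of maps. -/
structure IsBlockMin (n : ℕ) (f : ℕ → ℕ) : Prop where
  le : ∀ a, f a ≤ a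
  idem : ∀ a, f (f a) = f a
  nested : ∀ a b, f b ≤ a → a ≤ b → f b ≤ f a
  fixed : ∀ a, n ≤ a → f a = a

/-- The number of blocks of the partition of `{0, …, n - 1}` with block-minimum map `f`. -/
def blockCount (n : ℕ) (f : ℕ → ℕ) : ℕ :=
  Nat.count (fun a => f a = a) n

section Encoding

variable {n : ℕ} (P : Finpartition (Finset.univ : Finset (Fin n)))

theorem sameBlock_iff_part_eq {a b : Fin n} : SameBlock P a b ↔ P.part a = P.part b := by
  rw [← P.mem_part_iff_part_eq_part (Finset.mem_univ a) (Finset.mem_univ b), P.mem_part_iff_exists]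
  rfl

theorem crossNumPart_eq_zero_iff : crossNumPart P = 0 ↔ IsNoncrossing P := by
  rw [crossNumPart, Nat.card_eq_zero, or_iff_left (not_infinite_iff_finite.2 inferInstance),
    isEmpty_subtype]
  simp only [sameBlock_iff_part_eq, Interleaves, Prod.forall, IsNoncrossing]
  grind

/-- `blockMin P` extended to the natural numbers by the identity. -/
def blockMinNat (a : ℕ) : ℕ :=
  if h : a < n then (blockMin P ⟨a, h⟩ : Fin n) else a

theorem blockMinNat_coe (a : Fin n) : blockMinNat P a = blockMin P a := by
  simp [blockMinNat]

theorem blockMinNat_of_le {a : ℕ} (h : n ≤ a) : blockMinNat P a = a :=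
  dif_neg h.not_gt

theorem blockCount_blockMinNat : blockCount n (blockMinNat P) = P.parts.card := by
  have hcount : blockCount n (blockMinNat P) = {a | blockMin P a = a}.ncard := by
    rw [blockCount, Nat.count_eq_card_filter_range, ← Set.ncard_coe_finset,
      ← Set.ncard_image_of_injective _ Fin.val_injective]
    congr 1
    ext a
    simp only [blockMinNat]
    grind
  rw [hcount, ← Set.ncard_coe_finset, ← (bijOn_part_blockMin_eq_self P).image_eq,
    (bijOn_part_blockMin_eq_self P).injOn.ncard_image]

theorem blockMinNat_injective :
    Function.Injective (blockMinNat : Finpartition (Finset.univ : Finset (Fin n)) → ℕ → ℕ) :=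
  fun P Q h => blockMin_injective <| funext fun a =>
    Fin.ext (by rw [← blockMinNat_coe, h, blockMinNat_coe])

variable {P} in
theorem IsNoncrossing.isBlockMin (hP : IsNoncrossing P) : IsBlockMin n (blockMinNat P) where
  le a := by
    rcases lt_or_ge a n with h | h
    · lift a to Fin n using h
      exact (blockMinNat_coe P a).trans_le (blockMin_le_of_part_eq P rfl)
    · exact (blockMinNat_of_le P h).le
  idem a := by
    rcases lt_or_ge a n with h | h
    · lift a to Fin n using h
      rw [blockMinNat_coe, blockMinNat_coe, blockMin_blockMin]
    · simp only [blockMinNat_of_le P h]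
  nested a b hba hab := by
    rcases lt_or_ge b n with h | h
    · lift b to Fin n using h
      lift a to Fin n using hab.trans_lt b.2
      rw [blockMinNat_coe] at hba
      rw [blockMinNat_coe, blockMinNat_coe]
      exact hP.blockMin_le_blockMin hba hab
    · rw [blockMinNat_of_le P h] at hba
      rw [le_antisymm hab hba]
  fixed _ := blockMinNat_of_le P

theorem IsBlockMin.exists_blockMinNat_eq {f : ℕ → ℕ} (hf : IsBlockMin n f) :
    ∃ P : Finpartition (Finset.univ : Finset (Fin n)), IsNoncrossing P ∧ blockMinNat P = f := by
  classical
  let P := Finpartition.ofSetoid (Setoid.ker fun a : Fin n => f a)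
  have hP (a b : Fin n) : P.part a = P.part b ↔ f a = f b := by
    rw [← P.mem_part_iff_part_eq_part (Finset.mem_univ a) (Finset.mem_univ b), eq_comm (a := f a)]
    exact Finpartition.mem_part_ofSetoid_iff_rel
  refine ⟨P, fun a b c d hab hbc hcd hac hbd => ?_, funext fun a => ?_⟩
  · rw [hP] at hac hbd ⊢
    have hcb : f c ≤ f b := hf.nested b c (hac ▸ (hf.le a).trans hab.le) hbc.le
    have hdc : f d ≤ f c := hf.nested c d (hbd ▸ (hf.le b).trans hbc.le) hcd.le
    exact le_antisymm (hac ▸ hcb) (hbd ▸ hac ▸ hdc)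
  · rcases lt_or_ge a n with h | h
    · lift a to Fin n using h
      rw [blockMinNat_coe]
      refine le_antisymm ?_ ?_
      · exact blockMin_le_of_part_eq P (b := ⟨f a, (hf.le a).trans_lt a.2⟩)
          ((hP _ _).2 (hf.idem a).symm)
      · rw [← (hP _ _).1 (part_blockMin P a)]
        exact hf.le _
    · rw [hf.fixed a h, blockMinNat_of_le P h]

variable (n) in
theorem bijOn_blockMinNat (m : ℕ) :
    Set.BijOn blockMinNat
      {P : Finpartition (Finset.univ : Finset (Fin n)) | crossNumPart P = 0 ∧ P.parts.card = m}
      {f | IsBlockMin n f ∧ blockCount n f = m} := by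
  simp only [crossNumPart_eq_zero_iff, ← blockCount_blockMinNat]
  refine ⟨fun P hP => ⟨hP.1.isBlockMin, hP.2⟩, blockMinNat_injective.injOn, ?_⟩
  rintro f ⟨hf, hm⟩
  obtain ⟨P, hP, rfl⟩ := hf.exists_blockMinNat_eq
  exact ⟨P, ⟨hP, hm⟩, rfl⟩

end Encoding

/-- The ordered sum of two partitions in terms of block-minimum maps: `f` on `{0, …, j - 1}`,
followed by `g` shifted up by `j`. -/
def concatBlockMin (j : ℕ) (f g : ℕ → ℕ) (a : ℕ) : ℕ :=
  if a < j then f a else j + g (a - j)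

theorem concatBlockMin_of_lt {j a : ℕ} {f g : ℕ → ℕ} (h : a < j) :
    concatBlockMin j f g a = f a :=
  if_pos h

theorem concatBlockMin_add (j a : ℕ) (f g : ℕ → ℕ) :
    concatBlockMin j f g (j + a) = j + g a := by
  simp [concatBlockMin]

theorem le_concatBlockMin {j a : ℕ} (f g : ℕ → ℕ) (h : j ≤ a) : j ≤ concatBlockMin j f g a := by
  simp [concatBlockMin, h.not_gt]

theorem isBlockMin_id (n : ℕ) : IsBlockMin n id :=
  ⟨fun _ => le_rfl, fun _ => rfl, fun _ _ h _ => h, fun _ _ => rfl⟩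

namespace IsBlockMin

variable {i j k n : ℕ} {f f' g g' : ℕ → ℕ}

theorem eq_id (hf : IsBlockMin 0 f) : f = id :=
  funext fun a => hf.fixed a a.zero_le

theorem succ (hf : IsBlockMin n f) : IsBlockMin (n + 1) f :=
  ⟨hf.le, hf.idem, hf.nested, fun a ha => hf.fixed a (by omega)⟩

theorem concat (hf : IsBlockMin j f) (hg : IsBlockMin i g) :
    IsBlockMin (j + i) (concatBlockMin j f g) where
  le a := by
    grind [concatBlockMin, hf.le a, hg.le (a - j)]
  idem a := by
    grind [concatBlockMin, hf.le a, hf.idem a, hg.idem (a - j)]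
  nested a b hba hab := by
    have := hf.nested a b
    have := hg.nested (a - j) (b - j)
    grind [concatBlockMin]
  fixed a ha := by
    have := hg.fixed (a - j) (by omega)
    grind [concatBlockMin]

theorem concat_inj (hf : IsBlockMin j f) (hf' : IsBlockMin j f')
    (h : concatBlockMin j f g = concatBlockMin j f' g') : f = f' ∧ g = g' := by
  refine ⟨funext fun a => ?_, funext fun a => ?_⟩
  · rcases lt_or_ge a j with ha | ha
    · simpa only [concatBlockMin_of_lt ha] using congrFun h a
    · rw [hf.fixed a ha, hf'.fixed a ha]
  · simpa only [concatBlockMin_add, add_right_inj] using congrFun h (j + a)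

theorem restrict (hf : IsBlockMin n f) (j : ℕ) :
    IsBlockMin j (fun a => if a < j then f a else a) where
  le a := by
    grind [hf.le a]
  idem a := by
    grind [hf.idem a]
  nested a b hba hab := by
    have := hf.nested a b
    grind
  fixed a ha := if_neg ha.not_gt

theorem shift (hf : IsBlockMin (j + i) f) (hj : ∀ a, j ≤ a → j ≤ f a) :
    IsBlockMin i (fun a => f (j + a) - j) where
  le a := by
    grind [hf.le (j + a)]
  idem a := by
    rw [Nat.add_sub_cancel' (hj _ (by omega)), hf.idem]
  nested a b hba hab := by
    have := hf.nested (j + a) (j + b)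
    omega
  fixed a ha := by
    grind [hf.fixed (j + a)]

theorem exists_concat (hf : IsBlockMin (j + i) f) (hj : ∀ a, j ≤ a → j ≤ f a) :
    ∃ g h, IsBlockMin j g ∧ IsBlockMin i h ∧ concatBlockMin j g h = f := by
  refine ⟨_, _, hf.restrict j, hf.shift hj, funext fun a => ?_⟩
  grind [concatBlockMin]

theorem update_attach (hf : IsBlockMin n f) (hk : k < n) (hvis : ∀ a, k < a → a < n → k < f a) :
    IsBlockMin (n + 1) (Function.update f n (f k)) where
  le a := by
    grind [hf.le a, hf.le k]
  idem a := by
    have := hf.le k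
    rcases eq_or_ne a n with rfl | ha
    · rw [Function.update_self, Function.update_of_ne (by omega), hf.idem]
    · have := hf.fixed a
      have := hf.le a
      rw [Function.update_of_ne ha, Function.update_of_ne (by omega), hf.idem]
  nested a b hba hab := by
    rcases eq_or_ne a n with rfl | ha
    · grind [hf.fixed b]
    rw [Function.update_of_ne ha]
    rcases eq_or_ne b n with rfl | hb
    · rw [Function.update_self] at hba ⊢
      rcases le_or_gt a k with hak | hka
      · exact hf.nested a k hba hak
      · exact (hf.le k).trans (hvis a hka (by omega)).le
    · rw [Function.update_of_ne hb] at hba ⊢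
      exact hf.nested a b hba hab
  fixed a ha := by
    grind [hf.fixed a]

theorem update_self (hf : IsBlockMin (n + 1) f) : IsBlockMin n (Function.update f n n) where
  le a := by
    grind [hf.le a]
  idem a := by
    grind [hf.idem a, hf.le a, hf.fixed a]
  nested a b hba hab := by
    have := hf.nested a b
    have := hf.fixed b
    grind
  fixed a ha := by
    grind [hf.fixed a]

end IsBlockMin

theorem blockCount_congr {n : ℕ} {f g : ℕ → ℕ} (h : ∀ a < n, f a = g a) :
    blockCount n f = blockCount n g := by
  simp only [blockCount, Nat.count_eq_card_filter_range]
  congr 1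
  grind

theorem blockCount_succ (n : ℕ) (f : ℕ → ℕ) :
    blockCount (n + 1) f = blockCount n f + if f n = n then 1 else 0 :=
  Nat.count_succ ..

theorem blockCount_concatBlockMin (j i : ℕ) (f g : ℕ → ℕ) :
    blockCount (j + i) (concatBlockMin j f g) = blockCount j f + blockCount i g := by
  rw [← blockCount_congr fun a ha => concatBlockMin_of_lt (f := f) (g := g) ha]
  simp only [blockCount, Nat.count_add, concatBlockMin_add, add_right_inj]

section Decomposition

/-- Noncrossing partitions of all sizes, as pairs of a size and a block-minimum map. -/
def noncrossingClass : Set (ℕ × (ℕ → ℕ)) :=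
  {p | IsBlockMin p.1 p.2}

/-- The part of `noncrossingClass` without the empty partition. -/
def nonemptyClass : Set (ℕ × (ℕ → ℕ)) :=
  {p ∈ noncrossingClass | 0 < p.1}

/-- The exponent of the monomial `x ^ points * y ^ blocks`. -/
noncomputable def pointsBlocks (p : ℕ × (ℕ → ℕ)) : Fin 2 →₀ ℕ :=
  Finsupp.single 0 p.1 + Finsupp.single 1 (blockCount p.1 p.2)

/-- Adds a last point as a singleton block. -/
def addSingleton (p : ℕ × (ℕ → ℕ)) : ℕ × (ℕ → ℕ) :=
  (p.1 + 1, p.2)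

/-- Places the second partition after the first and adds a last point to the block containing the
last point `p.1.1 - 1` of the first, which must be nonempty. -/
def attach (p : (ℕ × (ℕ → ℕ)) × (ℕ × (ℕ → ℕ))) : ℕ × (ℕ → ℕ) :=
  (p.1.1 + p.2.1 + 1,
    Function.update (concatBlockMin p.1.1 p.1.2 p.2.2) (p.1.1 + p.2.1) (p.1.2 (p.1.1 - 1)))

variable {p : ℕ × (ℕ → ℕ)} {q : (ℕ × (ℕ → ℕ)) × (ℕ × (ℕ → ℕ))}

theorem addSingleton_mem (hp : p ∈ noncrossingClass) : addSingleton p ∈ nonemptyClass :=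
  ⟨IsBlockMin.succ hp, p.1.succ_pos⟩

theorem addSingleton_injective : Function.Injective addSingleton := fun p q h => by
  simpa only [addSingleton, Prod.ext_iff, add_left_inj] using h

theorem attach_apply_last (q : (ℕ × (ℕ → ℕ)) × (ℕ × (ℕ → ℕ))) :
    (attach q).2 (q.1.1 + q.2.1) = q.1.2 (q.1.1 - 1) :=
  Function.update_self ..

theorem attach_apply_of_lt {a : ℕ} (ha : a < q.1.1 + q.2.1) :
    (attach q).2 a = concatBlockMin q.1.1 q.1.2 q.2.2 a :=
  Function.update_of_ne ha.ne ..

theorem attach_mem (hq : q ∈ nonemptyClass ×ˢ noncrossingClass) : attach q ∈ nonemptyClass := by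
  obtain ⟨⟨hf, hpos⟩, hg⟩ := hq
  have hvis (a : ℕ) (ha : q.1.1 - 1 < a) (_ : a < q.1.1 + q.2.1) :
      q.1.1 - 1 < concatBlockMin q.1.1 q.1.2 q.2.2 a := by
    have := le_concatBlockMin q.1.2 q.2.2 (show q.1.1 ≤ a by omega)
    omega
  have hattach := (IsBlockMin.concat hf hg).update_attach (by omega) hvis
  rw [concatBlockMin_of_lt (by omega)] at hattach
  exact ⟨hattach, Nat.succ_pos _⟩

theorem attach_apply_last_lt (hq : q ∈ nonemptyClass ×ˢ noncrossingClass) :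
    (attach q).2 (q.1.1 + q.2.1) < q.1.1 := by
  obtain ⟨⟨hf, hpos⟩, -⟩ := hq
  have := IsBlockMin.le hf (q.1.1 - 1)
  rw [attach_apply_last]
  omega

theorem isGreatest_attach (hq : q ∈ nonemptyClass ×ˢ noncrossingClass) :
    IsGreatest {k | k < q.1.1 + q.2.1 ∧ (attach q).2 k = (attach q).2 (q.1.1 + q.2.1)}
      (q.1.1 - 1) := by
  have hpos := hq.1.2
  refine ⟨⟨by omega, ?_⟩, fun k hk => ?_⟩
  · rw [attach_apply_last, attach_apply_of_lt (by omega), concatBlockMin_of_lt (by omega)]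
  · by_contra! hlt
    have hlast := attach_apply_last_lt hq
    rw [← hk.2, attach_apply_of_lt hk.1] at hlast
    have := le_concatBlockMin q.1.2 q.2.2 (show q.1.1 ≤ k by omega)
    omega

theorem injOn_attach : Set.InjOn attach (nonemptyClass ×ˢ noncrossingClass) := by
  rintro ⟨⟨j, f⟩, i, g⟩ hp ⟨⟨j', f'⟩, i', g'⟩ hq h
  have hsize : j + i = j' + i' := Nat.succ_injective (congrArg Prod.fst h)
  have hcut : j - 1 = j' - 1 := (isGreatest_attach hp).unique (by
    have := isGreatest_attach hq
    rwa [← h, ← hsize] at this)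
  have hj : 0 < j := hp.1.2
  have hj' : 0 < j' := hq.1.2
  obtain rfl : j = j' := by omega
  obtain rfl : i = i' := by omega
  have hlast {f g : ℕ → ℕ} (hf : IsBlockMin j f) (hg : IsBlockMin i g) :
      Function.update (attach ((j, f), (i, g))).2 (j + i) (j + i) = concatBlockMin j f g := by
    simp only [attach, Function.update_idem]
    exact Function.update_eq_self_iff.2 ((hf.concat hg).fixed _ le_rfl).symm
  have hconcat : concatBlockMin j f g = concatBlockMin j f' g' := by
    rw [← hlast hp.1.1 hp.2, h, hlast hq.1.1 hq.2]
  obtain ⟨rfl, rfl⟩ := IsBlockMin.concat_inj hp.1.1 hq.1.1 hconcat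
  rfl

theorem IsBlockMin.exists_attach_eq {n : ℕ} {f : ℕ → ℕ} (hf : IsBlockMin (n + 1) f)
    (hn : f n ≠ n) : ∃ p ∈ nonemptyClass ×ˢ noncrossingClass, attach p = (n + 1, f) := by
  obtain ⟨k, ⟨hkn, hk⟩, hmax⟩ : ∃ k, IsGreatest {k | k < n ∧ f k = f n} k :=
    BddAbove.exists_isGreatest_of_nonempty ⟨n, fun _ hk => hk.1.le⟩
      ⟨f n, (hf.le n).lt_of_ne hn, hf.idem n⟩
  obtain ⟨i, rfl⟩ : ∃ i, n = k + 1 + i := Nat.exists_eq_add_of_le hkn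
  have hvis (a : ℕ) (ha : k < a) : k < Function.update f (k + 1 + i) (k + 1 + i) a := by
    rcases lt_trichotomy a (k + 1 + i) with han | rfl | han
    · rw [Function.update_of_ne han.ne]
      by_contra! hle
      have hfa : f a = f (k + 1 + i) := le_antisymm
        (hk ▸ hf.nested k a hle ha.le)
        (hf.nested a _ (hk ▸ (hf.le k).trans ha.le) han.le)
      exact ha.not_ge (hmax ⟨han, hfa⟩)
    · rwa [Function.update_self]
    · rwa [Function.update_of_ne han.ne', hf.fixed a han]
  obtain ⟨g, h, hg, hh, hgh⟩ := hf.update_self.exists_concat hvis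
  refine ⟨((k + 1, g), (i, h)), ⟨⟨hg, k.succ_pos⟩, hh⟩, Prod.ext rfl ?_⟩
  have hgk : g k = f (k + 1 + i) := by
    rw [← concatBlockMin_of_lt (f := g) (g := h) k.lt_succ_self, hgh,
      Function.update_of_ne hkn.ne, hk]
  simp only [attach, hgh, Nat.add_sub_cancel, hgk, Function.update_idem, Function.update_eq_self]

theorem disjoint_image_addSingleton_image_attach :
    Disjoint (addSingleton '' noncrossingClass)
      (attach '' (nonemptyClass ×ˢ noncrossingClass)) := by
  refine Set.disjoint_left.2 ?_
  rintro - ⟨p, hp, rfl⟩ ⟨q, hq, hqp⟩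
  have hsize : q.1.1 + q.2.1 = p.1 := Nat.succ_injective (congrArg Prod.fst hqp)
  have hlast := attach_apply_last_lt hq
  rw [hqp, hsize, addSingleton, IsBlockMin.fixed hp p.1 le_rfl] at hlast
  omega

theorem nonemptyClass_eq_union : nonemptyClass = addSingleton '' noncrossingClass ∪
    attach '' (nonemptyClass ×ˢ noncrossingClass) := by
  refine Set.Subset.antisymm ?_ (Set.union_subset ?_ ?_)
  · rintro ⟨_ | n, f⟩ ⟨hf, hpos⟩
    · exact absurd hpos (lt_irrefl 0)
    by_cases hn : f n = n
    · have hf' := IsBlockMin.update_self hf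
      rw [Function.update_eq_self_iff.2 hn.symm] at hf'
      exact Or.inl ⟨(n, f), hf', rfl⟩
    · exact Or.inr (IsBlockMin.exists_attach_eq hf hn)
  · rintro - ⟨p, hp, rfl⟩
    exact addSingleton_mem hp
  · rintro - ⟨p, hp, rfl⟩
    exact attach_mem hp

theorem noncrossingClass_eq_union : noncrossingClass = {(0, id)} ∪ nonemptyClass := by
  refine Set.Subset.antisymm ?_ (Set.union_subset ?_ (Set.sep_subset ..))
  · rintro ⟨_ | n, f⟩ hf
    · exact Or.inl (Prod.ext rfl (IsBlockMin.eq_id hf))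
    · exact Or.inr ⟨hf, n.succ_pos⟩
  · rintro - rfl
    exact isBlockMin_id 0

theorem pointsBlocks_addSingleton (hp : p ∈ noncrossingClass) :
    pointsBlocks (addSingleton p) =
      (Finsupp.single 0 1 + Finsupp.single 1 1) + pointsBlocks p := by
  have hcount : blockCount (p.1 + 1) p.2 = blockCount p.1 p.2 + 1 := by
    rw [blockCount_succ, if_pos (IsBlockMin.fixed hp p.1 le_rfl)]
  simp only [pointsBlocks, addSingleton, hcount, Finsupp.single_add]
  abel

theorem blockCount_attach (hq : q ∈ nonemptyClass ×ˢ noncrossingClass) :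
    blockCount (attach q).1 (attach q).2 = blockCount q.1.1 q.1.2 + blockCount q.2.1 q.2.2 := by
  have hlast : (attach q).2 (q.1.1 + q.2.1) ≠ q.1.1 + q.2.1 :=
    ((attach_apply_last_lt hq).trans_le (Nat.le_add_right ..)).ne
  calc blockCount (attach q).1 (attach q).2
    _ = blockCount (q.1.1 + q.2.1) (attach q).2 := by
        rw [show (attach q).1 = q.1.1 + q.2.1 + 1 from rfl, blockCount_succ, if_neg hlast, add_zero]
    _ = blockCount (q.1.1 + q.2.1) (concatBlockMin q.1.1 q.1.2 q.2.2) :=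
        blockCount_congr fun _ => attach_apply_of_lt
    _ = blockCount q.1.1 q.1.2 + blockCount q.2.1 q.2.2 := blockCount_concatBlockMin ..

theorem pointsBlocks_attach (hq : q ∈ nonemptyClass ×ˢ noncrossingClass) :
    pointsBlocks (attach q) = Finsupp.single 0 1 + (pointsBlocks q.1 + pointsBlocks q.2) := by
  rw [pointsBlocks, blockCount_attach hq]
  simp only [pointsBlocks, attach, Finsupp.single_add]
  abel

end Decomposition

section Equations

theorem pointsBlocks_eq_iff {p : ℕ × (ℕ → ℕ)} {e : Fin 2 →₀ ℕ} :
    pointsBlocks p = e ↔ p.1 = e 0 ∧ blockCount p.1 p.2 = e 1 := by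
  simp [pointsBlocks, Finsupp.ext_iff, Fin.forall_fin_two]

theorem bijOn_noncrossingClass (e : Fin 2 →₀ ℕ) :
    Set.BijOn (fun P => (e 0, blockMinNat P))
      {P : Finpartition (Finset.univ : Finset (Fin (e 0))) |
        crossNumPart P = 0 ∧ P.parts.card = e 1}
      {p ∈ noncrossingClass | pointsBlocks p = e} := by
  have hbij := bijOn_blockMinNat (e 0) (e 1)
  refine ⟨fun P hP => ?_, fun P hP Q hQ hPQ => hbij.injOn hP hQ (congrArg Prod.snd hPQ), ?_⟩
  · obtain ⟨hf, hm⟩ := hbij.mapsTo hP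
    exact ⟨hf, pointsBlocks_eq_iff.2 ⟨rfl, hm⟩⟩
  · rintro ⟨n, f⟩ ⟨hf, hsize⟩
    obtain ⟨rfl, hm⟩ := pointsBlocks_eq_iff.1 hsize
    obtain ⟨P, hP, rfl⟩ := hbij.surjOn ⟨hf, hm⟩
    exact ⟨P, hP, rfl⟩

theorem finite_fiber_noncrossingClass (e : Fin 2 →₀ ℕ) :
    {p ∈ noncrossingClass | pointsBlocks p = e}.Finite :=
  (bijOn_noncrossingClass e).image_eq ▸ (Set.toFinite _).image _

theorem finite_fiber_nonemptyClass (e : Fin 2 →₀ ℕ) :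
    {p ∈ nonemptyClass | pointsBlocks p = e}.Finite :=
  (finite_fiber_noncrossingClass e).subset fun _ hp => ⟨hp.1.1, hp.2⟩

theorem partGF0_eq_generatingSeries :
    partGF0 = generatingSeries ℚ noncrossingClass pointsBlocks := by
  ext e
  rw [coeff_generatingSeries, ← (bijOn_noncrossingClass e).image_eq,
    (bijOn_noncrossingClass e).injOn.ncard_image]
  rfl

variable (R : Type*) [Semiring R]

theorem generatingSeries_noncrossingClass :
    generatingSeries R noncrossingClass pointsBlocks =
      1 + generatingSeries R nonemptyClass pointsBlocks := by
  have hdisj : Disjoint {(0, id)} nonemptyClass :=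
    Set.disjoint_singleton_left.2 fun h => lt_irrefl 0 h.2
  have hempty : pointsBlocks (0, id) = 0 := by simp [pointsBlocks, blockCount]
  rw [noncrossingClass_eq_union, generatingSeries_union hdisj
    (fun _ => (Set.finite_singleton _).subset (Set.sep_subset ..)) finite_fiber_nonemptyClass,
    generatingSeries_singleton, hempty, monomial_zero_one]

theorem generatingSeries_nonemptyClass :
    generatingSeries R nonemptyClass pointsBlocks =
      X 0 * X 1 * generatingSeries R noncrossingClass pointsBlocks +
        X 0 * (generatingSeries R nonemptyClass pointsBlocks *
          generatingSeries R noncrossingClass pointsBlocks) := by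
  have hsub := nonemptyClass_eq_union.ge
  have hfinite {S : Set (ℕ × (ℕ → ℕ))} (hS : S ⊆ nonemptyClass) (e : Fin 2 →₀ ℕ) :
      {p ∈ S | pointsBlocks p = e}.Finite :=
    (finite_fiber_nonemptyClass e).subset fun _ hp => ⟨hS hp.1, hp.2⟩
  calc generatingSeries R nonemptyClass pointsBlocks
    _ = generatingSeries R (addSingleton '' noncrossingClass) pointsBlocks +
          generatingSeries R (attach '' (nonemptyClass ×ˢ noncrossingClass)) pointsBlocks := by
        rw [← generatingSeries_union disjoint_image_addSingleton_image_attach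
          (hfinite (Set.subset_union_left.trans hsub))
          (hfinite (Set.subset_union_right.trans hsub)), ← nonemptyClass_eq_union]
    _ = _ := by
        rw [generatingSeries_image addSingleton_injective.injOn
            fun _ => pointsBlocks_addSingleton, generatingSeries_const_add,
          generatingSeries_image injOn_attach fun _ => pointsBlocks_attach,
          generatingSeries_const_add, generatingSeries_prod finite_fiber_nonemptyClass
            finite_fiber_noncrossingClass, X, X, monomial_mul_monomial, one_mul]

end Equations

/-- The generating function `P₀(x,y)` of crossing-free partitions of points on
a circle satisfies `x·P₀² + (xy − x − 1)·P₀ + 1 = 0`. -/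
theorem partGF0_algebraic_equation :
    (MvPowerSeries.X 0 : MvPowerSeries (Fin 2) ℚ) * partGF0 ^ 2 +
      (MvPowerSeries.X 0 * MvPowerSeries.X 1 - MvPowerSeries.X 0 - 1) * partGF0 + 1 = 0 := by
  rw [partGF0_eq_generatingSeries]
  have hP := generatingSeries_noncrossingClass ℚ
  have hN := generatingSeries_nonemptyClass ℚ
  linear_combination (X 0 * generatingSeries ℚ noncrossingClass pointsBlocks - 1) * hP - hN
end

section
/- The number of partitions of n labeled points on a circle having exactly one crossing (counted with multiplicity) equals binom(2n−5, n−4) for every n ≥ 4. -/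
/-!
If the only crossing of a partition is that of `a c` with `b d`, where `a < b < c < d`, then its
blocks are exactly `{a, c}` and `{b, d}`: any further point would produce a second crossing. Merging
them gives a noncrossing partition with a marked block of four elements, and splitting a marked
block `{a, b, c, d}` of a noncrossing partition into `{a, c}` and `{b, d}` is the inverse operation.

Noncrossing partitions of `n` points are encoded by Łukasiewicz words of length `n + 1`, whose
letters are the block sizes, each placed at the least element of its block. By the cycle lemma every
word of length `n + 1` and sum `n` has exactly one rotation which is a Łukasiewicz word, so rotating
a marked letter `4` to the front turns the marked words into all words of sum `n` starting with
`4`. These are the multisets of size `n - 4` over `n` positions.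
-/

open Finset

namespace CircleCrossings

section Partitions

/-- Partitions of a finite type, encoded as equivalence relations. -/
noncomputable def finpartitionEquivSetoid (α : Type*) [Fintype α] [DecidableEq α] :
    Finpartition (univ : Finset α) ≃ Setoid α := by
  classical exact
  { toFun := fun P => Setoid.ker P.part
    invFun := fun r => Finpartition.ofSetoid r
    left_inv := fun P => by
      have parts_subset {P Q : Finpartition (univ : Finset α)} (h : P.part = Q.part) :
          P.parts ⊆ Q.parts := fun B hB => by
        obtain ⟨b, hb⟩ := P.nonempty_of_mem_parts hB
        rw [← P.part_eq_of_mem hB hb, h]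
        exact Q.part_mem.2 (mem_univ b)
      have part_eq : (Finpartition.ofSetoid (Setoid.ker P.part)).part = P.part := by
        ext a b
        rw [Finpartition.mem_part_ofSetoid_iff_rel, Setoid.ker_def, eq_comm,
          P.mem_part_iff_part_eq_part (mem_univ b) (mem_univ a)]
      exact Finpartition.ext ((parts_subset part_eq).antisymm (parts_subset part_eq.symm))
    right_inv := fun r => by
      ext a b
      rw [Setoid.ker_def, eq_comm,
        ← Finpartition.mem_part_iff_part_eq_part _ (mem_univ b) (mem_univ a),
        Finpartition.mem_part_ofSetoid_iff_rel] }

lemma sameBlock_iff_finpartitionEquivSetoid {n : ℕ} {P : Finpartition (univ : Finset (Fin n))}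
    {a b : Fin n} : SameBlock P a b ↔ finpartitionEquivSetoid (Fin n) P a b :=
  P.mem_part_iff_exists.symm.trans (P.mem_part_iff_part_eq_part (mem_univ a) (mem_univ b))

end Partitions

section MergeSplit

variable {α : Type*}

/-- The equivalence relation obtained from `r` by merging the points of `S` into one class. It is
coarser than `r` when `S` is a union of classes, the only case in which it is used. -/
def glue (r : Setoid α) (S : Set α) : Setoid α where
  r x y := (x ∈ S ∧ y ∈ S) ∨ (x ∉ S ∧ y ∉ S ∧ r x y)
  iseqv :=
    { refl := fun x => by have := r.refl' x; tauto
      symm := fun {x y} h => by have : r x y → r y x := r.symm'; tauto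
      trans := fun {x y z} h h' => by have : r x y → r y z → r x z := r.trans'; tauto }

/-- The equivalence relation obtained from `r` by separating `S` from its complement. -/
def cut (r : Setoid α) (S : Set α) : Setoid α := r ⊓ Setoid.ker (· ∈ S)

lemma glue_iff {r : Setoid α} {S : Set α} {x y : α} :
    glue r S x y ↔ (x ∈ S ∧ y ∈ S) ∨ (x ∉ S ∧ y ∉ S ∧ r x y) := Iff.rfl

lemma cut_iff {r : Setoid α} {S : Set α} {x y : α} : cut r S x y ↔ r x y ∧ (x ∈ S ↔ y ∈ S) :=
  and_congr_right fun _ => eq_iff_iff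

end MergeSplit

section Crossings

variable {α : Type*} [LinearOrder α] {r q : Setoid α} {a b c d : α}

/-- The quadruple `(a, b, c, d)` is a crossing of `r`: the chords `a c` and `b d` cross and lie in
two different classes of `r`. -/
def IsCrossing (r : Setoid α) : α × α × α × α → Prop
  | (a, b, c, d) => a < b ∧ b < c ∧ c < d ∧ r a c ∧ r b d ∧ ¬ r a b

/-- A noncrossing partition, encoded as an equivalence relation. -/
def IsNoncrossing (r : Setoid α) : Prop := ∀ x, ¬ IsCrossing r x

/-- The quadruple `x` is the only crossing of `r`. -/
def IsUniqueCrossing (r : Setoid α) (x : α × α × α × α) : Prop :=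
  IsCrossing r x ∧ ∀ y, IsCrossing r y → y = x

/-- The quadruple `(a, b, c, d)` lists a class of `r` with four elements in increasing order. -/
def IsFourBlock (r : Setoid α) : α × α × α × α → Prop
  | (a, b, c, d) => a < b ∧ b < c ∧ c < d ∧ ∀ x, r a x ↔ x = a ∨ x = b ∨ x = c ∨ x = d

lemma IsUniqueCrossing.rel_left_iff (h : IsUniqueCrossing r (a, b, c, d)) (x : α) :
    r a x ↔ x = a ∨ x = c := by
  obtain ⟨⟨hab, hbc, hcd, hac, hbd, hn⟩, huniq⟩ := h
  refine ⟨fun hx => ?_, by rintro (rfl | rfl); exacts [r.refl' _, hac]⟩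
  have hxc : r x c := r.trans' (r.symm' hx) hac
  have hxb : ¬ r x b := fun h => hn (r.trans' hx h)
  have ne_b : x ≠ b := fun h => hxb (h ▸ r.refl' _)
  have ne_d : x ≠ d := fun h => hxb (h ▸ r.symm' hbd)
  rcases ne_b.lt_or_gt with hlt | hgt
  · have := huniq (x, b, c, d) ⟨hlt, hbc, hcd, hxc, hbd, hxb⟩
    grind
  rcases ne_d.lt_or_gt with hlt | hgt
  · have := huniq (a, b, x, d) ⟨hab, hgt, hlt, hx, hbd, hn⟩
    grind
  · have hbc' : ¬ r b c := fun h => hxb (r.trans' hxc (r.symm' h))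
    have := huniq (b, c, d, x) ⟨hbc, hcd, hgt, hbd, r.symm' hxc, hbc'⟩
    grind

lemma IsUniqueCrossing.rel_right_iff (h : IsUniqueCrossing r (a, b, c, d)) (x : α) :
    r b x ↔ x = b ∨ x = d := by
  obtain ⟨⟨hab, hbc, hcd, hac, hbd, hn⟩, huniq⟩ := h
  refine ⟨fun hx => ?_, by rintro (rfl | rfl); exacts [r.refl' _, hbd]⟩
  have hxd : r x d := r.trans' (r.symm' hx) hbd
  have hax : ¬ r a x := fun h => hn (r.trans' h (r.symm' hx))
  have ne_a : a ≠ x := fun h => hax (h ▸ r.refl' _)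
  have ne_c : c ≠ x := fun h => hax (h ▸ hac)
  rcases ne_a.lt_or_gt with hlt | hgt
  · rcases ne_c.lt_or_gt with hlt' | hgt'
    · have := huniq (a, b, c, x) ⟨hab, hbc, hlt', hac, hx, hn⟩
      grind
    · have := huniq (a, x, c, d) ⟨hlt, hgt', hcd, hac, hxd, hax⟩
      grind
  · have := huniq (x, a, b, c) ⟨hgt, hab, hbc, r.symm' hx, hac, fun h => hax (r.symm' h)⟩
    grind

lemma IsUniqueCrossing.isFourBlock_glue (h : IsUniqueCrossing r (a, b, c, d)) :
    IsFourBlock (glue r {a, b, c, d}) (a, b, c, d) := by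
  obtain ⟨hab, hbc, hcd, -⟩ := h.1
  exact ⟨hab, hbc, hcd, fun x => by simp [glue_iff]⟩

lemma IsUniqueCrossing.mem_Ioo_iff (h : IsUniqueCrossing r (a, b, c, d)) {x y z : α}
    (hxy : r x y) (hx : x ∉ ({a, b, c, d} : Set α)) (hz : z ∈ ({a, b, c, d} : Set α)) :
    z ∈ Set.Ioo x y ↔ a ∈ Set.Ioo x y := by
  obtain ⟨hab, hbc, hcd, hac, hbd, -⟩ := h.1
  have ha := h.rel_left_iff
  have hb := h.rel_right_iff
  -- `x y` crosses neither `a c` nor `b d`, and these two chords cross each other.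
  have not_crosses {u v : α} (huv : r u v) (hux : ¬ r u x) :
      ¬ (x < u ∧ u < y ∧ y < v) ∧ ¬ (u < x ∧ x < v ∧ v < y) := by
    refine ⟨fun ⟨h₁, h₂, h₃⟩ => ?_, fun ⟨h₁, h₂, h₃⟩ => ?_⟩
    · have := h.2 (x, u, y, v) ⟨h₁, h₂, h₃, hxy, huv, fun h => hux (r.symm' h)⟩
      grind
    · have := h.2 (u, x, v, y) ⟨h₁, h₂, h₃, huv, hxy, hux⟩
      grind
  have hby : ¬ r b y := fun h => hx (by grind [(hb x).1 (r.trans' h (r.symm' hxy))])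
  have hac' := not_crosses hac (by grind)
  have hbd' := not_crosses hbd (by grind)
  simp only [Set.mem_insert_iff, Set.mem_singleton_iff, Set.mem_Ioo] at *
  grind

lemma IsUniqueCrossing.isNoncrossing_glue (h : IsUniqueCrossing r (a, b, c, d)) :
    IsNoncrossing (glue r {a, b, c, d}) := by
  rintro ⟨i, j, k, l⟩ ⟨hij, hjk, hkl, hik, hjl, hn⟩
  rw [glue_iff] at hik hjl hn
  rcases hik with ⟨hi, hk⟩ | ⟨hi, hk, hik⟩ <;> rcases hjl with ⟨hj, hl⟩ | ⟨hj, hl, hjl⟩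
  · exact hn (.inl ⟨hi, hj⟩)
  · have hi' := h.mem_Ioo_iff hjl hj hi
    have hk' := h.mem_Ioo_iff hjl hj hk
    exact hij.not_gt (hi'.2 (hk'.1 ⟨hjk, hkl⟩)).1
  · have hj' := h.mem_Ioo_iff hik hi hj
    have hl' := h.mem_Ioo_iff hik hi hl
    exact hkl.not_gt (hl'.2 (hj'.1 ⟨hij, hjk⟩)).2
  · have := h.2 (i, j, k, l) ⟨hij, hjk, hkl, hik, hjl, fun h => hn (.inr ⟨hi, hj, h⟩)⟩
    exact hi (by simp_all)

lemma IsUniqueCrossing.cut_glue (h : IsUniqueCrossing r (a, b, c, d)) :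
    cut (glue r {a, b, c, d}) {a, c} = r := by
  ext x y
  have ha := h.rel_left_iff
  have hb := h.rel_right_iff
  simp only [cut_iff, glue_iff, Set.mem_insert_iff, Set.mem_singleton_iff]
  simp only [← Quotient.eq (r := r)] at *
  grind

lemma IsFourBlock.glue_cut (h : IsFourBlock q (a, b, c, d)) :
    glue (cut q {a, c}) {a, b, c, d} = q := by
  ext x y
  have ha := h.2.2.2
  simp only [cut_iff, glue_iff, Set.mem_insert_iff, Set.mem_singleton_iff]
  simp only [← Quotient.eq (r := q)] at *
  grind

lemma IsFourBlock.isUniqueCrossing_cut (h : IsFourBlock q (a, b, c, d)) (hq : IsNoncrossing q) :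
    IsUniqueCrossing (cut q {a, c}) (a, b, c, d) := by
  obtain ⟨hab, hbc, hcd, ha⟩ := h
  have hb := (ha b).2 (by simp)
  have hc := (ha c).2 (by simp)
  have hd := (ha d).2 (by simp)
  have hbd : q b d := q.trans' (q.symm' hb) hd
  refine ⟨⟨hab, hbc, hcd, cut_iff.2 ⟨hc, by simp⟩, cut_iff.2 ⟨hbd, ?_⟩, ?_⟩, ?_⟩
  · simp [hab.ne', hbc.ne, hcd.ne', ((hab.trans hbc).trans hcd).ne']
  · simp [cut_iff, hab.ne', hbc.ne]
  rintro ⟨i, j, k, l⟩ ⟨hij, hjk, hkl, hik, hjl, hn⟩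
  simp only [cut_iff, Set.mem_insert_iff, Set.mem_singleton_iff] at hik hjl hn
  have hqij : q i j := by
    by_contra h
    exact hq (i, j, k, l) ⟨hij, hjk, hkl, hik.1, hjl.1, h⟩
  have hqi : q a i := by
    by_contra h
    simp only [← Quotient.eq (r := q)] at *
    grind
  have hi := (ha i).1 hqi
  have hj := (ha j).1 (q.trans' hqi hqij)
  have hk := (ha k).1 (q.trans' hqi hik.1)
  have hl := (ha l).1 (q.trans' hqi (q.trans' hqij hjl.1))
  grind

/-- Merging the two blocks of a unique crossing leaves a noncrossing partition in which they form a
marked block with four elements, and the crossing is recovered by splitting that block. -/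
def uniqueCrossingEquiv (α : Type*) [LinearOrder α] :
    {x : Setoid α × α × α × α × α // IsUniqueCrossing x.1 x.2} ≃
      {x : Setoid α × α × α × α × α // IsNoncrossing x.1 ∧ IsFourBlock x.1 x.2} where
  toFun := fun ⟨(r, a, b, c, d), h⟩ =>
    ⟨(glue r {a, b, c, d}, a, b, c, d), h.isNoncrossing_glue, h.isFourBlock_glue⟩
  invFun := fun ⟨(q, a, b, c, d), hq, h⟩ => ⟨(cut q {a, c}, a, b, c, d), h.isUniqueCrossing_cut hq⟩
  left_inv := fun ⟨(_, _, _, _, _), h⟩ => Subtype.ext (Prod.ext h.cut_glue rfl)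
  right_inv := fun ⟨(_, _, _, _, _), _, h⟩ => Subtype.ext (Prod.ext h.glue_cut rfl)

end Crossings

section CrossNum

variable {n : ℕ}

lemma crossNumPart_eq_card_isCrossing (P : Finpartition (univ : Finset (Fin n))) :
    crossNumPart P = Nat.card {x // IsCrossing (finpartitionEquivSetoid (Fin n) P) x} :=
  Nat.card_congr
    { toFun := fun ⟨((a, c), (b, d)), ⟨hab, hbc, hcd⟩, hac, hbd, h⟩ => ⟨(a, b, c, d), hab, hbc, hcd,
        sameBlock_iff_finpartitionEquivSetoid.1 hac, sameBlock_iff_finpartitionEquivSetoid.1 hbd,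
        mt sameBlock_iff_finpartitionEquivSetoid.2 h⟩
      invFun := fun ⟨(a, b, c, d), hab, hbc, hcd, hac, hbd, h⟩ => ⟨((a, c), (b, d)),
        ⟨hab, hbc, hcd⟩, sameBlock_iff_finpartitionEquivSetoid.2 hac,
        sameBlock_iff_finpartitionEquivSetoid.2 hbd, mt sameBlock_iff_finpartitionEquivSetoid.1 h⟩
      left_inv := fun ⟨((_, _), (_, _)), ⟨_, _, _⟩, _, _, _⟩ => rfl
      right_inv := fun ⟨(_, _, _, _), _, _, _, _, _, _⟩ => rfl }

lemma crossNumPart_eq_one_iff {P : Finpartition (univ : Finset (Fin n))} :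
    crossNumPart P = 1 ↔ ∃ x, IsUniqueCrossing (finpartitionEquivSetoid (Fin n) P) x := by
  simp [crossNumPart_eq_card_isCrossing, Nat.card_eq_one_iff_exists, IsUniqueCrossing]

lemma card_crossNumPart_eq_one :
    Nat.card {P : Finpartition (univ : Finset (Fin n)) // crossNumPart P = 1} =
      Nat.card {x : Setoid (Fin n) × Fin n × Fin n × Fin n × Fin n //
        IsUniqueCrossing x.1 x.2} := by
  rw [Nat.card_congr ((finpartitionEquivSetoid (Fin n)).subtypeEquiv
    (q := fun r => ∃ x, IsUniqueCrossing r x) fun P => crossNumPart_eq_one_iff)]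
  refine (Nat.card_eq_of_bijective (fun x => ⟨x.1.1, x.1.2, x.2⟩) ⟨?_, ?_⟩).symm
  · rintro ⟨⟨r, x⟩, hx⟩ ⟨⟨r', y⟩, hy⟩ h
    obtain rfl : r = r' := congrArg Subtype.val h
    exact Subtype.ext (Prod.ext rfl (hy.2 x hx.1))
  · rintro ⟨r, x, hx⟩
    exact ⟨⟨(r, x), hx⟩, rfl⟩

end CrossNum

section Nested

variable {α : Type*} [LinearOrder α] {o : α → α}

/-- The arcs from `o i` up to `i` are nested: if one starts strictly after another, but not after
its right end, then it also ends strictly before that right end. The noncrossing partitions are the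
kernels of such maps, with `o i` the least element of the block of `i`. -/
structure IsNested (o : α → α) : Prop where
  apply_le : ∀ i, o i ≤ i
  lt_of_apply_lt : ∀ {i k}, o i < o k → o k ≤ i → k < i

lemma IsNested.apply_apply (h : IsNested o) (i : α) : o (o i) = o i :=
  (h.apply_le (o i)).eq_of_not_lt fun hlt => (h.apply_le i).not_gt (h.lt_of_apply_lt hlt le_rfl)

lemma IsNested.isNoncrossing_ker (h : IsNested o) : IsNoncrossing (Setoid.ker o) := by
  rintro ⟨a, b, c, d⟩ ⟨hab, hbc, hcd, hac, hbd, hn⟩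
  rw [Setoid.ker_def] at hac hbd hn
  rcases lt_or_gt_of_ne hn with hlt | hgt
  · exact hcd.not_gt (h.lt_of_apply_lt (hac ▸ hbd ▸ hlt) (hbd ▸ (h.apply_le b).trans hbc.le))
  · exact hbc.not_gt (h.lt_of_apply_lt (hac ▸ hgt) (hac ▸ (h.apply_le a).trans hab.le))

end Nested

section BlockMin

variable {α : Type*} [LinearOrder α] [WellFoundedLT α] {r : Setoid α} {i j : α}

/-- The least element of the class of `i`. -/
noncomputable def blockMin (r : Setoid α) (i : α) : α :=
  wellFounded_lt.min {j | r j i} ⟨i, r.refl' i⟩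

lemma blockMin_rel (r : Setoid α) (i : α) : r (blockMin r i) i :=
  WellFounded.min_mem _ {j | r j i} _

lemma blockMin_le_of_rel (h : r j i) : blockMin r i ≤ j :=
  WellFounded.min_le (s := {j | r j i}) _ h

lemma blockMin_le (r : Setoid α) (i : α) : blockMin r i ≤ i :=
  blockMin_le_of_rel (r.refl' i)

lemma blockMin_eq_iff : blockMin r i = blockMin r j ↔ r i j := by
  refine ⟨fun h => ?_, fun h => le_antisymm ?_ ?_⟩
  · exact r.trans' (r.symm' (blockMin_rel r i)) (h ▸ blockMin_rel r j)
  · exact blockMin_le_of_rel (r.trans' (blockMin_rel r j) (r.symm' h))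
  · exact blockMin_le_of_rel (r.trans' (blockMin_rel r i) h)

lemma ker_blockMin (r : Setoid α) : Setoid.ker (blockMin r) = r := by
  ext i j
  exact blockMin_eq_iff

lemma IsNoncrossing.isNested_blockMin (h : IsNoncrossing r) : IsNested (blockMin r) := by
  refine ⟨blockMin_le r, fun {i k} hlt hle => ?_⟩
  have hn : ¬ r i k := fun hik => hlt.ne (blockMin_eq_iff.2 hik)
  have hi := blockMin_rel r i
  have hk := blockMin_rel r k
  have hne : blockMin r k ≠ i := fun heq => hn (heq ▸ hk)
  by_contra! hik
  exact h (blockMin r i, blockMin r k, i, k) ⟨hlt, hle.lt_of_ne hne,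
    hik.lt_of_ne fun heq => hn (heq ▸ r.refl' i), hi, hk,
    fun hr => hn (r.trans' (r.symm' hi) (r.trans' hr hk))⟩

lemma IsNested.blockMin_ker {o : α → α} (h : IsNested o) : blockMin (Setoid.ker o) = o := by
  funext i
  have heq : o (blockMin (Setoid.ker o) i) = o i := blockMin_rel (Setoid.ker o) i
  exact (blockMin_le_of_rel (h.apply_apply i)).antisymm (heq ▸ h.apply_le _)

end BlockMin

section LastLevel

variable {β : Type*} [LinearOrder β] {H : ℕ → β} {i j : ℕ}

/-- The last time, at or before `i`, at which the path `H` is not above its position at time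
`i + 1`. -/
def lastLevel (H : ℕ → β) (i : ℕ) : ℕ := Nat.findGreatest (fun j => H j ≤ H (i + 1)) i

lemma lastLevel_le (H : ℕ → β) (i : ℕ) : lastLevel H i ≤ i := Nat.findGreatest_le i

lemma apply_lastLevel_le (h : H 0 ≤ H (i + 1)) : H (lastLevel H i) ≤ H (i + 1) :=
  Nat.findGreatest_spec (P := fun j => H j ≤ H (i + 1)) i.zero_le h

lemma lt_apply_of_lastLevel_lt (h : lastLevel H i < j) (hj : j ≤ i) : H (i + 1) < H j :=
  not_le.1 (Nat.findGreatest_is_greatest h hj)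

lemma lastLevel_eq (hji : j ≤ i) (hj : H j ≤ H (i + 1))
    (h : ∀ m, j < m → m ≤ i → H (i + 1) < H m) : lastLevel H i = j :=
  Nat.findGreatest_eq_iff.2 ⟨hji, fun _ => hj, fun {m} hm hmi => (h m hm hmi).not_ge⟩

end LastLevel

section Words

/-- The partial sums of `x` along the cycle of length `N`, starting from the letter `0`. -/
def cyclicSum {N : ℕ} [NeZero N] (x : Fin N → ℤ) (m : ℕ) : ℤ :=
  ∑ t ∈ range m, x (Fin.ofNat N t)

variable {n : ℕ}

/-- The Łukasiewicz path of the word `w`, in which the letter `k` is a step of `k - 1`. -/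
def height (w : Fin (n + 1) → ℕ) : ℕ → ℤ := cyclicSum fun j => (w j : ℤ) - 1

/-- Łukasiewicz words of length `n + 1`: the path ends at `-1` and is nonnegative before. -/
structure IsLukasiewicz (w : Fin (n + 1) → ℕ) : Prop where
  sum_eq : ∑ j, w j = n
  height_nonneg : ∀ m ≤ n, 0 ≤ height w m

lemma height_zero (w : Fin (n + 1) → ℕ) : height w 0 = 0 := rfl

lemma height_succ (w : Fin (n + 1) → ℕ) (j : Fin (n + 1)) :
    height w (j + 1) = height w j + (w j - 1) := by
  simp only [height, cyclicSum, sum_range_succ, Fin.ofNat_val_eq_self]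

/-- The word recording the sizes of the fibers of `o`. It has an additional letter `0` at the end,
which makes it a Łukasiewicz word when `o` is nested. -/
def fiberWord (o : Fin n → Fin n) (j : Fin (n + 1)) : ℕ := #{i | (o i).castSucc = j}

lemma sum_fiberWord (o : Fin n → Fin n) : ∑ j, fiberWord o j = n := by
  simp only [fiberWord]
  rw [← card_eq_sum_card_fiberwise fun _ _ => mem_univ _, card_univ, Fintype.card_fin]

lemma height_fiberWord_sub (o : Fin n → Fin n) {p m : ℕ} (hpm : p ≤ m) (hm : m ≤ n) :
    height (fiberWord o) m - height (fiberWord o) p =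
      (#{i | p ≤ (o i : ℕ) ∧ (o i : ℕ) < m} : ℤ) - (m - p) := by
  have card_fiber : ∀ t ∈ Ico p m, fiberWord o (Fin.ofNat (n + 1) t) =
      #{i ∈ {i | p ≤ (o i : ℕ) ∧ (o i : ℕ) < m} | (o i : ℕ) = t} := fun t ht => by
    rw [fiberWord, filter_filter]
    congr! 2 with i
    rw [mem_Ico] at ht
    have ht' : t % (n + 1) = t := Nat.mod_eq_of_lt (by omega)
    simp only [Fin.ext_iff, Fin.val_castSucc, Fin.val_ofNat, ht']
    omega
  have sum_fiber : ∑ t ∈ Ico p m, fiberWord o (Fin.ofNat (n + 1) t) =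
      #{i | p ≤ (o i : ℕ) ∧ (o i : ℕ) < m} := by
    rw [sum_congr rfl card_fiber, ← card_eq_sum_card_fiberwise fun i hi => by simpa using hi]
  rw [height, cyclicSum, cyclicSum, ← sum_Ico_eq_sub _ hpm, sum_sub_distrib, ← Nat.cast_sum,
    sum_fiber]
  simp [Nat.cast_sub hpm]

lemma IsNested.isLukasiewicz_fiberWord {o : Fin n → Fin n} (h : IsNested o) :
    IsLukasiewicz (fiberWord o) := by
  refine ⟨sum_fiberWord o, fun m hm => ?_⟩
  have hsub := height_fiberWord_sub o m.zero_le hm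
  have hcard : m ≤ #{i | 0 ≤ (o i : ℕ) ∧ (o i : ℕ) < m} := by
    calc m = #{i : Fin n | (i : ℕ) < m} := by simp [Fin.card_filter_val_lt, hm]
      _ ≤ _ := card_le_card fun i hi => by
        have := h.apply_le i
        simp only [mem_filter, mem_univ, true_and] at hi ⊢
        omega
  rw [height_zero] at hsub
  omega

lemma IsNested.height_apply_le {o : Fin n → Fin n} (h : IsNested o) (i : Fin n) :
    height (fiberWord o) (o i) ≤ height (fiberWord o) (i + 1) := by
  have hle : (o i : ℕ) ≤ i := h.apply_le i
  have hsub := height_fiberWord_sub o (show (o i : ℕ) ≤ i + 1 by omega) i.is_lt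
  have hcard := card_le_card (s := Icc (o i) i)
    (t := {k | (o i : ℕ) ≤ (o k : ℕ) ∧ (o k : ℕ) < i + 1}) fun k hk => by
      have := h.apply_le k
      have := h.lt_of_apply_lt (i := k) (k := i)
      simp only [mem_filter, mem_univ, true_and, mem_Icc] at hk ⊢
      omega
  rw [Fin.card_Icc] at hcard
  push_cast at hsub
  omega

lemma IsNested.height_succ_lt {o : Fin n → Fin n} (h : IsNested o) {i : Fin n} {m : ℕ}
    (hm : o i < m) (hmi : m ≤ i) : height (fiberWord o) (i + 1) < height (fiberWord o) m := by
  have hsub := height_fiberWord_sub o (show m ≤ i + 1 by omega) i.is_lt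
  have hcard := card_le_card (s := {k | m ≤ (o k : ℕ) ∧ (o k : ℕ) < i + 1})
    (t := Ico ⟨m, hmi.trans_lt i.is_lt⟩ i) fun k hk => by
      have := h.apply_le k
      have := h.lt_of_apply_lt (i := i) (k := k)
      simp only [mem_filter, mem_univ, true_and, mem_Ico, Fin.le_def] at hk ⊢
      omega
  rw [Fin.card_Ico] at hcard
  push_cast at hsub
  dsimp only at hcard
  omega

lemma IsNested.lastLevel_height {o : Fin n → Fin n} (h : IsNested o) (i : Fin n) :
    lastLevel (height (fiberWord o)) i = o i :=
  lastLevel_eq (h.apply_le i) (h.height_apply_le i) fun _ => h.height_succ_lt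

/-- The inverse of `fiberWord`: the arc ending at `i` starts where the path of `w` was last not
above its position after the step at `i`. -/
def arcStart (w : Fin (n + 1) → ℕ) (i : Fin n) : Fin n :=
  ⟨lastLevel (height w) i, (lastLevel_le _ _).trans_lt i.is_lt⟩

lemma IsNested.arcStart_fiberWord {o : Fin n → Fin n} (h : IsNested o) :
    arcStart (fiberWord o) = o :=
  funext fun i => Fin.ext (h.lastLevel_height i)

lemma IsLukasiewicz.height_arcStart_le {w : Fin (n + 1) → ℕ} (hw : IsLukasiewicz w) (i : Fin n) :
    height w (arcStart w i) ≤ height w (i + 1) :=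
  apply_lastLevel_le (hw.height_nonneg _ i.is_lt)

lemma height_succ_lt_of_arcStart_lt {w : Fin (n + 1) → ℕ} {i : Fin n} {m : ℕ}
    (h : arcStart w i < m) (hm : m ≤ i) : height w (i + 1) < height w m :=
  lt_apply_of_lastLevel_lt h hm

lemma IsLukasiewicz.isNested_arcStart {w : Fin (n + 1) → ℕ} (hw : IsLukasiewicz w) :
    IsNested (arcStart w) := by
  refine ⟨fun i => lastLevel_le _ _, fun {i k} hlt hle => ?_⟩
  by_contra! hik
  have hi := height_succ_lt_of_arcStart_lt hlt hle
  have hk := hw.height_arcStart_le k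
  rcases hik.eq_or_lt with rfl | hik
  · exact hlt.false
  · have := height_succ_lt_of_arcStart_lt (i := k) (m := i + 1) (Nat.lt_succ_of_le hle) hik
    omega

lemma IsLukasiewicz.fiberWord_arcStart_le {w : Fin (n + 1) → ℕ} (hw : IsLukasiewicz w)
    (j : Fin (n + 1)) : fiberWord (arcStart w) j ≤ w j := by
  -- The arcs starting at `j` end at distinct heights, all within the step of the path at `j`.
  have mem_Icc_height : ∀ i ∈ ({i | (arcStart w i).castSucc = j} : Finset (Fin n)),
      height w (i + 1) ∈ Icc (height w j) (height w (j + 1)) := by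
    intro i hi
    rw [mem_filter_univ] at hi
    subst hi
    rw [mem_Icc]
    refine ⟨hw.height_arcStart_le i, ?_⟩
    rcases (lastLevel_le (height w) i).eq_or_lt with heq | hlt
    · exact (congrArg (fun t => height w (t + 1)) heq).ge
    · exact (height_succ_lt_of_arcStart_lt (Nat.lt_succ_self _) hlt).le
  have height_strictAnti : StrictAntiOn (fun i : Fin n => height w (i + 1))
      ({i | (arcStart w i).castSucc = j} : Finset (Fin n)) := by
    intro i hi k hk hik
    simp only [coe_filter, mem_univ, true_and, Set.mem_ofPred_eq] at hi hk
    have heq : arcStart w k = arcStart w i := Fin.castSucc_injective n (hk.trans hi.symm)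
    exact height_succ_lt_of_arcStart_lt (heq ▸ Nat.lt_succ_of_le (lastLevel_le _ _)) hik
  have hcard := card_le_card_of_injOn _ mem_Icc_height height_strictAnti.injOn
  rw [Int.card_Icc, height_succ] at hcard
  rw [fiberWord]
  omega

lemma IsLukasiewicz.fiberWord_arcStart {w : Fin (n + 1) → ℕ} (hw : IsLukasiewicz w) :
    fiberWord (arcStart w) = w := by
  have hsum := (sum_fiberWord (arcStart w)).trans hw.sum_eq.symm
  funext j
  exact (sum_eq_sum_iff_of_le fun j _ => hw.fiberWord_arcStart_le j).1 hsum j (mem_univ j)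

/-- Noncrossing partitions correspond to Łukasiewicz words: each letter is the size of the block
with the given least element, or `0` if there is none. -/
noncomputable def noncrossingEquivLukasiewicz (n : ℕ) :
    {r : Setoid (Fin n) // IsNoncrossing r} ≃ {w : Fin (n + 1) → ℕ // IsLukasiewicz w} where
  toFun r := ⟨fiberWord (blockMin r.1), r.2.isNested_blockMin.isLukasiewicz_fiberWord⟩
  invFun w := ⟨Setoid.ker (arcStart w.1), w.2.isNested_arcStart.isNoncrossing_ker⟩
  left_inv r := Subtype.ext <|
    (congrArg Setoid.ker r.2.isNested_blockMin.arcStart_fiberWord).trans (ker_blockMin r.1)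
  right_inv w := Subtype.ext <|
    (congrArg fiberWord w.2.isNested_arcStart.blockMin_ker).trans w.2.fiberWord_arcStart

end Words

section CycleLemma

lemma existsUnique_forall_le_add {N : ℕ} (hN : 0 < N) {W : ℕ → ℤ} (hW : ∀ m, W (m + N) = W m - 1) :
    ∃! j, j < N ∧ ∀ m < N, W j ≤ W (j + m) := by
  classical
  -- The unique `j` is the first position of the minimum over one period.
  have exists_min : ∃ j, j < N ∧ ∀ i < N, W j ≤ W i := by
    obtain ⟨j, hj, hmin⟩ := exists_min_image (range N) W ⟨0, mem_range.2 hN⟩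
    exact ⟨j, mem_range.1 hj, fun i hi => hmin i (mem_range.2 hi)⟩
  obtain ⟨hj, hmin⟩ := Nat.find_spec exists_min
  set j := Nat.find exists_min
  have lt_of_lt (i : ℕ) (hi : i < j) : W j < W i := by
    by_contra! hle
    exact Nat.find_min exists_min hi ⟨hi.trans hj, fun i' hi' => hle.trans (hmin i' hi')⟩
  refine ⟨j, ⟨hj, fun m hm => ?_⟩, fun j' ⟨hj', hle'⟩ => ?_⟩
  · rcases lt_or_ge (j + m) N with hlt | hge
    · exact hmin _ hlt
    · have hi := lt_of_lt (j + m - N) (by omega)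
      have hW' := hW (j + m - N)
      rw [Nat.sub_add_cancel hge] at hW'
      omega
  · rcases lt_trichotomy j j' with hlt | heq | hgt
    · have hle := hle' (N - (j' - j)) (by omega)
      rw [show j' + (N - (j' - j)) = j + N by omega, hW] at hle
      have := hmin j' hj'
      omega
    · exact heq.symm
    · have := lt_of_lt j' hgt
      have hle := hle' (j - j') (by omega)
      rw [Nat.add_sub_cancel' hgt.le] at hle
      omega

variable {N : ℕ} [NeZero N]

lemma cyclicSum_add_eq (x : Fin N → ℤ) (m : ℕ) :
    cyclicSum x (m + N) = cyclicSum x m + ∑ i, x i := by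
  have hN : cyclicSum x N = ∑ i, x i := by
    rw [cyclicSum, ← Fin.sum_univ_eq_sum_range fun t => x (Fin.ofNat N t)]
    simp only [Fin.ofNat_val_eq_self]
  rw [← hN, add_comm m, add_comm (cyclicSum x m), cyclicSum, sum_range_add]
  exact congrArg _ (sum_congr rfl fun t _ => congrArg x (Fin.ext (Nat.add_mod_left N t)))

lemma cyclicSum_rotate (x : Fin N → ℤ) (j : Fin N) (m : ℕ) :
    cyclicSum (fun i => x (i + j)) m = cyclicSum x (j + m) - cyclicSum x j := by
  rw [cyclicSum, cyclicSum, cyclicSum, sum_range_add, add_sub_cancel_left]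
  exact sum_congr rfl fun t _ => by rw [Fin.ofNat_add, add_comm]

lemma existsUnique_cyclicSum_rotate_nonneg {x : Fin N → ℤ} (hx : ∑ i, x i = -1) :
    ∃! j, ∀ m < N, 0 ≤ cyclicSum (fun i => x (i + j)) m := by
  obtain ⟨j, ⟨hj, hle⟩, huniq⟩ := existsUnique_forall_le_add (W := cyclicSum x) (NeZero.pos N)
    fun m => by rw [cyclicSum_add_eq, hx, sub_eq_add_neg]
  simp only [cyclicSum_rotate, sub_nonneg]
  exact ⟨⟨j, hj⟩, hle, fun j' hle' => Fin.ext (huniq j' ⟨j'.is_lt, hle'⟩)⟩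

variable {n : ℕ}

lemma existsUnique_isLukasiewicz_rotate {w : Fin (n + 1) → ℕ} (hw : ∑ i, w i = n) :
    ∃! j, IsLukasiewicz fun i => w (i + j) := by
  have hsum : ∑ i, ((w i : ℤ) - 1) = -1 := by
    simp [sum_sub_distrib, ← Nat.cast_sum, hw]
  refine (existsUnique_congr fun j => ?_).1 (existsUnique_cyclicSum_rotate_nonneg hsum)
  have hrot := (Equiv.sum_comp (Equiv.addRight j) w).trans hw
  exact ⟨fun h => ⟨hrot, fun m hm => h m (Nat.lt_succ_of_le hm)⟩,
    fun h m hm => h.height_nonneg m (Nat.le_of_lt_succ hm)⟩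

lemma card_isLukasiewicz_marked (n k : ℕ) :
    Nat.card {x : (Fin (n + 1) → ℕ) × Fin (n + 1) // IsLukasiewicz x.1 ∧ x.1 x.2 = k} =
      Nat.card {v : Fin (n + 1) → ℕ // ∑ i, v i = n ∧ v 0 = k} := by
  refine Nat.card_eq_of_bijective (fun x => ⟨fun i => x.1.1 (i + x.1.2),
    (Equiv.sum_comp (Equiv.addRight x.1.2) x.1.1).trans x.2.1.sum_eq, by simpa using x.2.2⟩)
    ⟨?_, ?_⟩
  · rintro ⟨⟨w, j⟩, hw, hj⟩ ⟨⟨w', j'⟩, hw', hj'⟩ heq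
    have hrot (i) : w (i + j) = w' (i + j') := congrFun (congrArg Subtype.val heq) i
    have hw_eq : w = fun i => w' (i + (j' - j)) := funext fun i => by
      rw [← add_sub_assoc, add_sub_right_comm, ← hrot, sub_add_cancel]
    have hj_eq : j' - j = 0 := (existsUnique_isLukasiewicz_rotate hw'.sum_eq).unique
      (hw_eq ▸ hw) (by simpa using hw')
    obtain rfl : j' = j := sub_eq_zero.1 hj_eq
    obtain rfl : w = w' := by simpa using hw_eq
    rfl
  · rintro ⟨v, hv, hk⟩
    obtain ⟨j, hj, -⟩ := existsUnique_isLukasiewicz_rotate hv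
    exact ⟨⟨(fun i => v (i + j), -j), hj, by simpa using hk⟩, by simp⟩

lemma card_fun_sum_eq (n s : ℕ) :
    Nat.card {u : Fin n → ℕ // ∑ i, u i = s} = Nat.multichoose n s := by
  rw [← Nat.card_congr (Sym.equivNatSumOfFintype (Fin n) s), Nat.card_eq_fintype_card,
    Sym.card_sym_eq_multichoose, Fintype.card_fin]

lemma card_fun_sum_eq_and_zero_eq {n k : ℕ} (hk : k ≤ n) :
    Nat.card {v : Fin (n + 1) → ℕ // ∑ i, v i = n ∧ v 0 = k} = Nat.multichoose n (n - k) := by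
  rw [← card_fun_sum_eq]
  exact Nat.card_congr
    { toFun := fun v => ⟨Fin.tail v.1, by
        have hv := v.2.1
        rw [Fin.sum_univ_succ, v.2.2] at hv
        exact Nat.eq_sub_of_add_eq' hv⟩
      invFun := fun u => ⟨(Fin.cons k u.1 : Fin (n + 1) → ℕ), by
        rw [Fin.sum_cons, u.2, Nat.add_sub_cancel' hk], rfl⟩
      left_inv := fun ⟨v, _, hv⟩ => Subtype.ext (hv ▸ Fin.cons_self_tail v)
      right_inv := fun u => rfl }

end CycleLemma

section FourBlocks

lemma exists_lt_of_card_eq_four {α : Type*} [LinearOrder α] {s : Finset α} (hs : #s = 4) :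
    ∃ a b c d, a < b ∧ b < c ∧ c < d ∧ ∀ x, x ∈ s ↔ x = a ∨ x = b ∨ x = c ∨ x = d := by
  let f := s.orderEmbOfFin hs
  refine ⟨f 0, f 1, f 2, f 3, f.strictMono (by decide), f.strictMono (by decide),
    f.strictMono (by decide), fun x => ?_⟩
  rw [← mem_coe, ← s.range_orderEmbOfFin hs]
  simp only [Set.mem_range, Fin.exists_fin_succ]
  simp [f, eq_comm]

lemma IsFourBlock.eq_of_fst_eq {α : Type*} [LinearOrder α] {q : Setoid α} {x y : α × α × α × α}
    (hx : IsFourBlock q x) (hy : IsFourBlock q y) (h : x.1 = y.1) : x = y := by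
  obtain ⟨a, b, c, d⟩ := x
  obtain ⟨a', b', c', d'⟩ := y
  obtain ⟨-, hbc, hcd, hx⟩ := hx
  obtain ⟨hab', hbc', hcd', hy⟩ := hy
  obtain rfl : a = a' := h
  simp only [hx] at hy
  grind [hy b, hy c, hy d, hy b', hy c', hy d']

lemma IsFourBlock.blockMin_eq_left_iff {α : Type*} [LinearOrder α] [WellFoundedLT α] {q : Setoid α}
    {a b c d x : α} (h : IsFourBlock q (a, b, c, d)) : blockMin q x = a ↔ q a x := by
  have ha : blockMin q a = a := by
    have hmem := (h.2.2.2 _).1 (q.symm' (blockMin_rel q a))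
    have hle := blockMin_le q a
    obtain ⟨hab, hbc, hcd, -⟩ := h
    grind
  rw [← blockMin_eq_iff, ha, eq_comm]

variable {n : ℕ} {q : Setoid (Fin n)}

lemma IsFourBlock.fiberWord_blockMin {a b c d : Fin n} (h : IsFourBlock q (a, b, c, d)) :
    fiberWord (blockMin q) a.castSucc = 4 := by
  have hmin (i : Fin n) : blockMin q i = a ↔ q a i := h.blockMin_eq_left_iff
  obtain ⟨hab, hbc, hcd, hiff⟩ := h
  have hfiber : ({i | (blockMin q i).castSucc = a.castSucc} : Finset (Fin n)) = {a, b, c, d} := by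
    ext i
    simp [hmin, hiff]
  rw [fiberWord, hfiber]
  grind

lemma exists_isFourBlock {j : Fin (n + 1)} (h : fiberWord (blockMin q) j = 4) :
    ∃ x, IsFourBlock q x ∧ x.1.castSucc = j := by
  obtain ⟨a, b, c, d, hab, hbc, hcd, hiff⟩ := exists_lt_of_card_eq_four h
  simp only [mem_filter_univ] at hiff
  have ha : (blockMin q a).castSucc = j := (hiff a).2 (.inl rfl)
  have hblock : IsFourBlock q (a, b, c, d) := ⟨hab, hbc, hcd, fun x => by
    rw [← hiff, ← ha, (Fin.castSucc_injective n).eq_iff, eq_comm, blockMin_eq_iff]⟩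
  exact ⟨_, hblock, by rw [← ha, hblock.blockMin_eq_left_iff.2 (q.refl' a)]⟩

lemma card_isNoncrossing_isFourBlock (n : ℕ) :
    Nat.card {x : Setoid (Fin n) × Fin n × Fin n × Fin n × Fin n //
        IsNoncrossing x.1 ∧ IsFourBlock x.1 x.2} =
      Nat.card {x : (Fin (n + 1) → ℕ) × Fin (n + 1) // IsLukasiewicz x.1 ∧ x.1 x.2 = 4} := by
  let word := noncrossingEquivLukasiewicz n
  refine Nat.card_eq_of_bijective (fun x => ⟨(word ⟨x.1.1, x.2.1⟩, x.1.2.1.castSucc),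
    (word ⟨x.1.1, x.2.1⟩).2, x.2.2.fiberWord_blockMin⟩) ⟨?_, ?_⟩
  · rintro ⟨⟨q, x⟩, hq, hx⟩ ⟨⟨q', y⟩, hq', hy⟩ heq
    have heq' := congrArg Subtype.val heq
    have hword := word.injective (Subtype.ext (congrArg Prod.fst heq'))
    obtain rfl : q = q' := congrArg Subtype.val hword
    have hfst := Fin.castSucc_injective n (congrArg Prod.snd heq')
    obtain rfl : x = y := hx.eq_of_fst_eq hy hfst
    rfl
  · rintro ⟨⟨w, j⟩, hw, hj⟩
    obtain ⟨⟨q, hq⟩, heq⟩ := word.surjective ⟨w, hw⟩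
    obtain rfl : fiberWord (blockMin q) = w := congrArg Subtype.val heq
    obtain ⟨x, hx, rfl⟩ := exists_isFourBlock hj
    exact ⟨⟨(q, x), hq, hx⟩, rfl⟩

end FourBlocks

end CircleCrossings

open CircleCrossings

/-- The number of partitions of `n` labeled points on a circle having exactly
one crossing (counted with multiplicity) equals `binom(2n−5, n−4)` for every
`n ≥ 4`. -/
theorem card_partitions_one_crossing (n : ℕ) (hn : 4 ≤ n) :
    Nat.card {P : Finpartition (Finset.univ : Finset (Fin n)) // crossNumPart P = 1} =
      Nat.choose (2 * n - 5) (n - 4) := by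
  rw [card_crossNumPart_eq_one, Nat.card_congr (uniqueCrossingEquiv (Fin n)),
    card_isNoncrossing_isFourBlock, card_isLukasiewicz_marked, card_fun_sum_eq_and_zero_eq hn,
    Nat.multichoose_eq]
  congr 1
  omega
end

section
/- The generating function D0(x,y) of crossing-free chord diagrams on a circle (x marks vertices, y marks chords, isolated vertices allowed) satisfies the algebraic equation y·D0² + (x²(1+y) − x(1+2y) − 2y)·D0 + x(1+2y) + y = 0. -/
open MvPowerSeries

/-- A chord diagram on the `n` labeled points `0, …, n−1` of a circle is a set
of chords, each recorded with its endpoints in increasing order; isolated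
vertices are allowed, chords may share endpoints, but there are no repeated
chords. `IsDiagram D` states that the chords are correctly normalized. -/
def IsDiagram {n : ℕ} (D : Finset (Fin n × Fin n)) : Prop :=
  ∀ p ∈ D, p.1 < p.2

/-- The generating function `D₀(x,y)` of crossing-free chord diagrams on a
circle, where `x` (variable `0`) marks vertices and `y` (variable `1`) marks
chords. -/
noncomputable def diagGF0 : MvPowerSeries (Fin 2) ℚ :=
  fun e => (Nat.card {D : Finset (Fin (e 0) × Fin (e 0)) //
    IsDiagram D ∧ crossNum D = 0 ∧ D.card = e 1} : ℚ)

/-!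
Look at the first vertex `a` of a diagram. Either `a` is isolated, or it has a last neighbour `c`,
and then no chord passes over `c`: such a chord would cross `(a, c)` or start at `a`. The diagram
is thus a diagram on `[a, c]` containing the chord `(a, c)`, glued at `c` to an arbitrary diagram
on `[c, b]`, where `b` is the last vertex. Since `(a, c)` crosses no chord on `[a, c]`, it can be
added or removed freely, so a fraction `y / (1 + y)` of the total weight on `[a, c]` comes from the
diagrams containing it. With `Wₙ` the sum of `y ^ #chords` over the diagrams on `n` vertices, this
gives
`(1 + y) Wₙ₊₁ = (1 + y) Wₙ + y ∑ Wᵢ₊₁ Wⱼ₊₁` over `i + j = n` with `0 < i`,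
and adding the term `y Wₙ₊₁` for `i = 0` completes the sum to a Cauchy product.
-/

open Finset

section CrossingFree

variable {α β : Type*} [LinearOrder α] [LinearOrder β]

/-- A set of chords between points of a linear order, each chord being the pair of its endpoints
in increasing order, is crossing-free if no two of its chords interleave. -/
def CrossingFree (D : Finset (α × α)) : Prop :=
  ∀ p ∈ D, ∀ q ∈ D, ¬(p.1 < q.1 ∧ q.1 < p.2 ∧ p.2 < q.2)

instance : DecidablePred (CrossingFree (α := α)) := fun D =>
  inferInstanceAs (Decidable (∀ p ∈ D, ∀ q ∈ D, ¬(p.1 < q.1 ∧ q.1 < p.2 ∧ p.2 < q.2)))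

/-- The crossing-free chord diagrams with vertex set `s`, where isolated vertices are allowed. The
cyclic order of the vertices is encoded by cutting the circle before the least one. -/
def crossingFreeDiagrams (s : Finset α) : Finset (Finset (α × α)) :=
  {D ∈ {p ∈ s ×ˢ s | p.1 < p.2}.powerset | CrossingFree D}

theorem mem_crossingFreeDiagrams {s : Finset α} {D : Finset (α × α)} :
    D ∈ crossingFreeDiagrams s ↔
      (∀ p ∈ D, p.1 ∈ s ∧ p.2 ∈ s ∧ p.1 < p.2) ∧ CrossingFree D := by
  simp only [crossingFreeDiagrams, mem_filter, mem_powerset, subset_iff, mem_product, and_assoc]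

theorem mem_crossingFreeDiagrams_Icc [LocallyFiniteOrder α] {a b : α} {D : Finset (α × α)} :
    D ∈ crossingFreeDiagrams (Icc a b) ↔
      (∀ p ∈ D, a ≤ p.1 ∧ p.1 < p.2 ∧ p.2 ≤ b) ∧ CrossingFree D := by
  simp only [mem_crossingFreeDiagrams, mem_Icc]
  refine and_congr_left fun _ => forall₂_congr fun p _ => ?_
  grind

theorem CrossingFree.mono {D E : Finset (α × α)} (hD : CrossingFree D) (h : E ⊆ D) :
    CrossingFree E :=
  fun p hp q hq => hD p (h hp) q (h hq)

theorem mem_crossingFreeDiagrams_of_subset {s : Finset α} {D E : Finset (α × α)}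
    (hD : D ∈ crossingFreeDiagrams s) (h : E ⊆ D) : E ∈ crossingFreeDiagrams s := by
  rw [mem_crossingFreeDiagrams] at hD ⊢
  exact ⟨fun p hp => hD.1 p (h hp), hD.2.mono h⟩

theorem crossingFree_map_iff (f : α ↪o β) {D : Finset (α × α)} :
    CrossingFree (D.map (f.toEmbedding.prodMap f.toEmbedding)) ↔ CrossingFree D := by
  simp only [CrossingFree, forall_mem_map]
  exact forall₄_congr fun p _ q _ => by simp

theorem crossingFreeDiagrams_map (f : α ↪o β) (s : Finset α) :
    crossingFreeDiagrams (s.map f.toEmbedding) =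
      (crossingFreeDiagrams s).map
        (mapEmbedding (f.toEmbedding.prodMap f.toEmbedding)).toEmbedding := by
  have hchords : {p ∈ s.map f.toEmbedding ×ˢ s.map f.toEmbedding | p.1 < p.2} =
      {p ∈ s ×ˢ s | p.1 < p.2}.map (f.toEmbedding.prodMap f.toEmbedding) := by
    rw [← prodMap_map_product, filter_map]
    simp [Function.comp_def]
  ext E
  simp only [crossingFreeDiagrams, hchords, mem_filter, mem_powerset, subset_map_iff, mem_map,
    RelEmbedding.coe_toEmbedding, mapEmbedding_apply]
  constructor
  · rintro ⟨⟨D, hD, rfl⟩, hcf⟩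
    exact ⟨D, ⟨hD, (crossingFree_map_iff f).1 hcf⟩, rfl⟩
  · rintro ⟨D, ⟨hD, hcf⟩, rfl⟩
    exact ⟨⟨D, hD, rfl⟩, (crossingFree_map_iff f).2 hcf⟩

theorem crossingFreeDiagrams_of_card_le_one {s : Finset α} (hs : #s ≤ 1) :
    crossingFreeDiagrams s = {∅} := by
  have hchords : {p ∈ s ×ˢ s | p.1 < p.2} = ∅ := by
    refine filter_eq_empty_iff.2 fun p hp => ?_
    rw [mem_product] at hp
    exact (card_le_one.1 hs _ hp.1 _ hp.2).not_lt
  rw [crossingFreeDiagrams, hchords, powerset_empty]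
  exact filter_true_of_mem (by simp [CrossingFree])

end CrossingFree

section LastNeighbor

variable {α : Type*} [LinearOrder α]

/-- The largest `c` such that the chord `(a, c)` belongs to `D`; it is `a` itself when no chord
of the diagram `D` starts at `a`. -/
def lastNeighbor (a : α) (D : Finset (α × α)) : α :=
  (insert a ({p ∈ D | p.1 = a}.image Prod.snd)).max' (insert_nonempty _ _)

theorem lastNeighbor_eq_iff {a c : α} {D : Finset (α × α)} :
    lastNeighbor a D = c ↔
      (c = a ∨ (a, c) ∈ D) ∧ a ≤ c ∧ ∀ d, (a, d) ∈ D → d ≤ c := by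
  simp [lastNeighbor, max'_eq_iff]

variable [LocallyFiniteOrder α] {a b c : α} {D E F : Finset (α × α)}

theorem lastNeighbor_mem_Icc (hab : a ≤ b) (hD : D ∈ crossingFreeDiagrams (Icc a b)) :
    lastNeighbor a D ∈ Icc a b := by
  obtain ⟨hmem, hle, -⟩ := lastNeighbor_eq_iff.1 (rfl : lastNeighbor a D = _)
  refine mem_Icc.2 ⟨hle, ?_⟩
  rcases hmem with heq | hmem
  · exact heq.trans_le hab
  · exact ((mem_crossingFreeDiagrams_Icc.1 hD).1 _ hmem).2.2

theorem filter_lastNeighbor_eq_self :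
    {D ∈ crossingFreeDiagrams (Icc a b) | lastNeighbor a D = a} =
      crossingFreeDiagrams (Ioc a b) := by
  ext D
  simp only [mem_filter, mem_crossingFreeDiagrams, lastNeighbor_eq_iff, mem_Icc, mem_Ioc]
  grind

theorem insert_mem_crossingFreeDiagrams_Icc (hab : a < b)
    (hD : D ∈ crossingFreeDiagrams (Icc a b)) :
    insert (a, b) D ∈ crossingFreeDiagrams (Icc a b) := by
  rw [mem_crossingFreeDiagrams_Icc] at hD ⊢
  simp only [CrossingFree, mem_insert] at hD ⊢
  grind

theorem union_mem_crossingFreeDiagrams_Icc (hac : a ≤ c) (hcb : c ≤ b)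
    (hE : E ∈ crossingFreeDiagrams (Icc a c)) (hF : F ∈ crossingFreeDiagrams (Icc c b)) :
    E ∪ F ∈ crossingFreeDiagrams (Icc a b) := by
  rw [mem_crossingFreeDiagrams_Icc] at hE hF ⊢
  simp only [CrossingFree, mem_union] at hE hF ⊢
  grind

theorem filter_snd_le_union_filter_le_fst_eq_self (hac : a < c)
    (hD : D ∈ crossingFreeDiagrams (Icc a b)) (hc : lastNeighbor a D = c) :
    {p ∈ D | p.2 ≤ c} ∪ {p ∈ D | c ≤ p.1} = D := by
  rw [mem_crossingFreeDiagrams_Icc] at hD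
  rw [lastNeighbor_eq_iff] at hc
  obtain ⟨hmem, -, hlast⟩ := hc
  have hac_mem : (a, c) ∈ D := hmem.resolve_left hac.ne'
  rw [← filter_or, filter_eq_self]
  intro p hp
  by_contra! hover
  rcases (hD.1 p hp).1.eq_or_lt with hstart | hinside
  · exact hover.1.not_ge (hlast p.2 (by rwa [hstart]))
  · exact hD.2 (a, c) hac_mem p hp ⟨hinside, hover.2, hover.1⟩

theorem filter_snd_le_mem_crossingFreeDiagrams (hD : D ∈ crossingFreeDiagrams (Icc a b)) :
    {p ∈ D | p.2 ≤ c} ∈ crossingFreeDiagrams (Icc a c) := by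
  rw [mem_crossingFreeDiagrams_Icc] at hD ⊢
  refine ⟨fun p hp => ?_, hD.2.mono (filter_subset _ _)⟩
  rw [mem_filter] at hp
  exact ⟨(hD.1 p hp.1).1, (hD.1 p hp.1).2.1, hp.2⟩

theorem filter_le_fst_mem_crossingFreeDiagrams (hD : D ∈ crossingFreeDiagrams (Icc a b)) :
    {p ∈ D | c ≤ p.1} ∈ crossingFreeDiagrams (Icc c b) := by
  rw [mem_crossingFreeDiagrams_Icc] at hD ⊢
  refine ⟨fun p hp => ?_, hD.2.mono (filter_subset _ _)⟩
  rw [mem_filter] at hp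
  exact ⟨hp.2, (hD.1 p hp.1).2⟩

theorem filter_snd_le_union_eq_left (hE : E ∈ crossingFreeDiagrams (Icc a c))
    (hF : F ∈ crossingFreeDiagrams (Icc c b)) : {p ∈ E ∪ F | p.2 ≤ c} = E := by
  rw [mem_crossingFreeDiagrams_Icc] at hE hF
  ext p
  grind

theorem filter_le_fst_union_eq_right (hE : E ∈ crossingFreeDiagrams (Icc a c))
    (hF : F ∈ crossingFreeDiagrams (Icc c b)) : {p ∈ E ∪ F | c ≤ p.1} = F := by
  rw [mem_crossingFreeDiagrams_Icc] at hE hF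
  ext p
  grind

theorem disjoint_of_mem_crossingFreeDiagrams_Icc (hE : E ∈ crossingFreeDiagrams (Icc a c))
    (hF : F ∈ crossingFreeDiagrams (Icc c b)) : Disjoint E F := by
  rw [mem_crossingFreeDiagrams_Icc] at hE hF
  rw [disjoint_left]
  grind

theorem lastNeighbor_union (hac : a < c) (hE : E ∈ crossingFreeDiagrams (Icc a c))
    (hF : F ∈ crossingFreeDiagrams (Icc c b)) (hmem : (a, c) ∈ E) :
    lastNeighbor a (E ∪ F) = c := by
  rw [mem_crossingFreeDiagrams_Icc] at hE hF
  rw [lastNeighbor_eq_iff]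
  grind

end LastNeighbor

section Weight

variable {α β A : Type*} [LinearOrder α] [LinearOrder β] [CommSemiring A] (y : A)

/-- The generating function, evaluated at `y`, of the crossing-free chord diagrams with vertex
set `s` by their number of chords. -/
def diagramWeight (s : Finset α) : A :=
  ∑ D ∈ crossingFreeDiagrams s, y ^ #D

theorem diagramWeight_map (f : α ↪o β) (s : Finset α) :
    diagramWeight y (s.map f.toEmbedding) = diagramWeight y s := by
  simp [diagramWeight, crossingFreeDiagrams_map]

theorem diagramWeight_congr_card {s : Finset α} {t : Finset β} (h : #s = #t) :
    diagramWeight y s = diagramWeight y t := by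
  calc diagramWeight y s
      = diagramWeight y (univ : Finset (Fin #t)) := by
        conv_lhs => rw [← map_orderEmbOfFin_univ s h, diagramWeight_map]
    _ = diagramWeight y t := by
        conv_rhs => rw [← map_orderEmbOfFin_univ t rfl, diagramWeight_map]

theorem diagramWeight_of_card_le_one {s : Finset α} (hs : #s ≤ 1) : diagramWeight y s = 1 := by
  simp [diagramWeight, crossingFreeDiagrams_of_card_le_one hs]

variable [LocallyFiniteOrder α] {a b c : α}

/-- As `diagramWeight y (Icc a b)`, restricted to the diagrams containing the chord `(a, b)`
that joins the two extreme vertices. -/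
def closedDiagramWeight (a b : α) : A :=
  ∑ D ∈ crossingFreeDiagrams (Icc a b) with (a, b) ∈ D, y ^ #D

theorem closedDiagramWeight_eq_mul_sum (hab : a < b) :
    closedDiagramWeight y a b =
      y * ∑ D ∈ crossingFreeDiagrams (Icc a b) with (a, b) ∉ D, y ^ #D := by
  rw [closedDiagramWeight, mul_sum]
  refine sum_nbij' (·.erase (a, b)) (insert (a, b)) ?_ ?_ ?_ ?_ ?_
  · intro D hD
    rw [mem_filter] at hD ⊢
    exact ⟨mem_crossingFreeDiagrams_of_subset hD.1 (erase_subset _ _), notMem_erase _ _⟩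
  · intro D hD
    exact mem_filter.2 ⟨insert_mem_crossingFreeDiagrams_Icc hab (mem_filter.1 hD).1,
      mem_insert_self _ _⟩
  · exact fun D hD => insert_erase (mem_filter.1 hD).2
  · exact fun D hD => erase_insert (mem_filter.1 hD).2
  · intro D hD
    rw [← card_erase_add_one (mem_filter.1 hD).2, pow_succ']

theorem one_add_mul_closedDiagramWeight (hab : a < b) :
    (1 + y) * closedDiagramWeight y a b = y * diagramWeight y (Icc a b) := by
  rw [diagramWeight, ← sum_filter_add_sum_filter_not _ ((a, b) ∈ ·), mul_add,
    ← closedDiagramWeight_eq_mul_sum y hab, closedDiagramWeight]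
  ring

theorem sum_lastNeighbor_eq (hac : a < c) (hcb : c ≤ b) :
    ∑ D ∈ crossingFreeDiagrams (Icc a b) with lastNeighbor a D = c, y ^ #D =
      closedDiagramWeight y a c * diagramWeight y (Icc c b) := by
  rw [closedDiagramWeight, diagramWeight, sum_mul_sum, ← sum_product']
  refine sum_nbij' (fun D => ({p ∈ D | p.2 ≤ c}, {p ∈ D | c ≤ p.1})) (fun E => E.1 ∪ E.2)
    ?_ ?_ ?_ ?_ ?_
  · intro D hD
    rw [mem_filter] at hD
    have hmem : (a, c) ∈ D := (lastNeighbor_eq_iff.1 hD.2).1.resolve_left hac.ne'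
    exact mem_product.2 ⟨mem_filter.2 ⟨filter_snd_le_mem_crossingFreeDiagrams hD.1,
      mem_filter.2 ⟨hmem, le_rfl⟩⟩, filter_le_fst_mem_crossingFreeDiagrams hD.1⟩
  · rintro ⟨E, F⟩ hEF
    rw [mem_product, mem_filter] at hEF
    obtain ⟨⟨hE, hmem⟩, hF⟩ := hEF
    exact mem_filter.2 ⟨union_mem_crossingFreeDiagrams_Icc hac.le hcb hE hF,
      lastNeighbor_union hac hE hF hmem⟩
  · intro D hD
    rw [mem_filter] at hD
    exact filter_snd_le_union_filter_le_fst_eq_self hac hD.1 hD.2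
  · rintro ⟨E, F⟩ hEF
    rw [mem_product, mem_filter] at hEF
    exact Prod.ext (filter_snd_le_union_eq_left hEF.1.1 hEF.2)
      (filter_le_fst_union_eq_right hEF.1.1 hEF.2)
  · intro D hD
    rw [mem_filter] at hD
    have hdisj := disjoint_of_mem_crossingFreeDiagrams_Icc
      (filter_snd_le_mem_crossingFreeDiagrams (c := c) hD.1)
      (filter_le_fst_mem_crossingFreeDiagrams (c := c) hD.1)
    rw [← pow_add, ← card_union_of_disjoint hdisj,
      filter_snd_le_union_filter_le_fst_eq_self hac hD.1 hD.2]

theorem diagramWeight_Icc_eq_add_sum (hab : a ≤ b) :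
    diagramWeight y (Icc a b) = diagramWeight y (Ioc a b) +
      ∑ c ∈ Ioc a b, closedDiagramWeight y a c * diagramWeight y (Icc c b) := by
  calc diagramWeight y (Icc a b)
      = ∑ c ∈ Icc a b,
          ∑ D ∈ crossingFreeDiagrams (Icc a b) with lastNeighbor a D = c, y ^ #D :=
        (sum_fiberwise_of_maps_to (fun _ => lastNeighbor_mem_Icc hab) _).symm
    _ = diagramWeight y (Ioc a b) + ∑ c ∈ Ioc a b,
          ∑ D ∈ crossingFreeDiagrams (Icc a b) with lastNeighbor a D = c, y ^ #D := by
        rw [← add_sum_Ioc_eq_sum_Icc hab, filter_lastNeighbor_eq_self, diagramWeight]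
    _ = _ := by
        congr 1
        refine sum_congr rfl fun c hc => ?_
        rw [mem_Ioc] at hc
        exact sum_lastNeighbor_eq y hc.1 hc.2

theorem one_add_two_mul_diagramWeight_Icc (hab : a ≤ b) :
    (1 + 2 * y) * diagramWeight y (Icc a b) = (1 + y) * diagramWeight y (Ioc a b) +
      y * ∑ c ∈ Icc a b, diagramWeight y (Icc a c) * diagramWeight y (Icc c b) := by
  have hclosed : (1 + y) * ∑ c ∈ Ioc a b, closedDiagramWeight y a c * diagramWeight y (Icc c b) =
      y * ∑ c ∈ Ioc a b, diagramWeight y (Icc a c) * diagramWeight y (Icc c b) := by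
    simp only [mul_sum, ← mul_assoc]
    refine sum_congr rfl fun c hc => ?_
    rw [one_add_mul_closedDiagramWeight y (mem_Ioc.1 hc).1]
  rw [← add_sum_Ioc_eq_sum_Icc hab, diagramWeight_of_card_le_one y (s := Icc a a) (by simp),
    mul_add, ← hclosed]
  calc (1 + 2 * y) * diagramWeight y (Icc a b)
      = (1 + y) * diagramWeight y (Icc a b) + y * diagramWeight y (Icc a b) := by ring
    _ = _ := by
      rw [diagramWeight_Icc_eq_add_sum y hab]
      ring

theorem one_add_two_mul_diagramWeight_range_succ (n : ℕ) :
    (1 + 2 * y) * diagramWeight y (range (n + 1)) = (1 + y) * diagramWeight y (range n) +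
      y * ∑ ij ∈ antidiagonal n,
        diagramWeight y (range (ij.1 + 1)) * diagramWeight y (range (ij.2 + 1)) := by
  have hIcc (a b : ℕ) : diagramWeight y (Icc a b) = diagramWeight y (range (b + 1 - a)) :=
    diagramWeight_congr_card y (by simp)
  have hIoc : diagramWeight y (Ioc 0 n) = diagramWeight y (range n) :=
    diagramWeight_congr_card y (by simp)
  have hrec := one_add_two_mul_diagramWeight_Icc y n.zero_le
  simp only [hIcc, hIoc, Nat.sub_zero] at hrec
  rw [hrec, Nat.sum_antidiagonal_eq_sum_range_succ_mk, Nat.range_succ_eq_Icc_zero]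
  congr 2
  refine sum_congr rfl fun c hc => ?_
  rw [Nat.sub_add_comm (mem_Icc.1 hc).2]

end Weight

section Series

variable {A : Type*} [CommSemiring A] (y : A)

/-- The generating function of crossing-free chord diagrams, with the power series variable
marking vertices and the coefficient `y` marking chords. -/
noncomputable def diagramSeries : PowerSeries A :=
  PowerSeries.mk fun n => diagramWeight y (range n)

/-- The generating function of the nonempty diagrams, with one vertex left unmarked. -/
noncomputable def diagramSeriesTail : PowerSeries A :=
  PowerSeries.mk fun n => diagramWeight y (range (n + 1))

theorem diagramSeries_eq_one_add : diagramSeries y = 1 + PowerSeries.X * diagramSeriesTail y := by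
  have hempty : diagramWeight y (∅ : Finset ℕ) = 1 := diagramWeight_of_card_le_one y (by simp)
  rw [PowerSeries.eq_X_mul_shift_add_const (diagramSeries y), add_comm]
  simp [diagramSeries, diagramSeriesTail, hempty]

theorem C_mul_diagramSeriesTail :
    PowerSeries.C (1 + 2 * y) * diagramSeriesTail y =
      PowerSeries.C (1 + y) * diagramSeries y + PowerSeries.C y * diagramSeriesTail y ^ 2 := by
  ext n
  rw [(PowerSeries.coeff n).map_add, PowerSeries.coeff_C_mul, PowerSeries.coeff_C_mul,
    PowerSeries.coeff_C_mul, sq, PowerSeries.coeff_mul]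
  simpa only [diagramSeries, diagramSeriesTail, PowerSeries.coeff_mk] using
    one_add_two_mul_diagramWeight_range_succ y n

theorem diagramSeries_quadratic {R : Type*} [CommRing R] (y : R) :
    PowerSeries.C y * diagramSeries y ^ 2 +
      (PowerSeries.X ^ 2 * (1 + PowerSeries.C y) - PowerSeries.X * (1 + 2 * PowerSeries.C y) -
        2 * PowerSeries.C y) * diagramSeries y +
      PowerSeries.X * (1 + 2 * PowerSeries.C y) + PowerSeries.C y = 0 := by
  have htail := C_mul_diagramSeriesTail y
  simp only [map_add, map_mul, map_one, map_ofNat] at htail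
  rw [diagramSeries_eq_one_add] at htail ⊢
  linear_combination -PowerSeries.X ^ 2 * htail

end Series

section Fin

variable {n : ℕ} {D : Finset (Fin n × Fin n)}

theorem crossNum_eq_zero_iff : crossNum D = 0 ↔ CrossingFree D := by
  rw [crossNum, card_eq_zero, filter_eq_empty_iff]
  exact ⟨fun h p hp q hq => h (mk_mem_product hp hq), fun h pq hpq =>
    h pq.1 (mem_product.1 hpq).1 pq.2 (mem_product.1 hpq).2⟩

theorem mem_crossingFreeDiagrams_univ :
    D ∈ crossingFreeDiagrams univ ↔ IsDiagram D ∧ crossNum D = 0 := by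
  simp [mem_crossingFreeDiagrams, crossNum_eq_zero_iff, IsDiagram]

theorem coeff_diagramWeight_X {σ R α : Type*} [CommSemiring R] [LinearOrder α] (i : σ)
    (s : Finset α) (m : ℕ) :
    coeff (Finsupp.single i m) (diagramWeight (MvPowerSeries.X i : MvPowerSeries σ R) s) =
      #{D ∈ crossingFreeDiagrams s | #D = m} := by
  classical
  simp [diagramWeight, coeff_X_pow, sum_boole, (Finsupp.single_injective i).eq_iff,
    @eq_comm _ m]

theorem coeff_diagGF0 (e : Fin 2 →₀ ℕ) :
    coeff e diagGF0 = coeff (Finsupp.single 0 (e 1))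
      (diagramWeight (MvPowerSeries.X 0 : MvPowerSeries (Fin 1) ℚ) (range (e 0))) := by
  have hcard : #(range (e 0)) = #(univ : Finset (Fin (e 0))) := by simp
  rw [diagramWeight_congr_card _ hcard, coeff_diagramWeight_X]
  refine congrArg Nat.cast (Nat.subtype_card _ fun D => ?_)
  rw [mem_filter, mem_crossingFreeDiagrams_univ, and_assoc]

theorem finSuccEquiv_diagGF0 :
    finSuccEquiv ℚ 1 diagGF0 = diagramSeries (MvPowerSeries.X 0) := by
  ext n x
  have hcons : Finsupp.cons n x 1 = x 0 := Finsupp.cons_succ 0 n x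
  have hx : Finsupp.single 0 (x 0) = x := Finsupp.unique_ext (by simp)
  rw [coeff_coeff_finSuccEquiv, coeff_diagGF0, hcons, hx, Finsupp.cons_zero, diagramSeries,
    PowerSeries.coeff_mk]

end Fin

/-- The generating function `D₀(x,y)` of crossing-free chord diagrams on a
circle satisfies `y·D₀² + (x²(1+y) − x(1+2y) − 2y)·D₀ + x(1+2y) + y = 0`. -/
theorem diagGF0_algebraic_equation :
    (MvPowerSeries.X 1 : MvPowerSeries (Fin 2) ℚ) * diagGF0 ^ 2 +
      (MvPowerSeries.X 0 ^ 2 * (1 + MvPowerSeries.X 1) -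
        MvPowerSeries.X 0 * (1 + 2 * MvPowerSeries.X 1) - 2 * MvPowerSeries.X 1) * diagGF0 +
      MvPowerSeries.X 0 * (1 + 2 * MvPowerSeries.X 1) + MvPowerSeries.X 1 = 0 := by
  have hX₀ : finSuccEquiv ℚ 1 (MvPowerSeries.X 0) = PowerSeries.X := finSuccEquiv_X_zero
  have hX₁ : finSuccEquiv ℚ 1 (MvPowerSeries.X 1) = PowerSeries.C (MvPowerSeries.X 0) :=
    finSuccEquiv_X_succ 0
  apply (finSuccEquiv ℚ 1).injective
  simp only [map_add, map_sub, map_mul, map_pow, map_one, map_ofNat, map_zero, hX₀, hX₁,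
    finSuccEquiv_diagGF0]
  exact diagramSeries_quadratic _
end
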